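/- arXiv:1506.06539 — 6 statements merged into one kernel-verified Lean document; each statement's English description precedes it below -/
import Mathlib

section
/- Let N ≤ M be nonnegative integers, let λ_1,…,λ_M be pairwise distinct complex numbers, let μ_1,…,μ_N be complex numbers, let c ∈ ℂ with c ≠ 0, and let λ_s ∈ ℂ satisfy (λ_s−λ_j)² + c² ≠ 0 for all j = 1,…,M. Then i·Σ_{j=1}^{M} [2c/((λ_s−λ_j)²+c²)]·[∏_{m=1}^{N}(μ_m−λ_j) / ∏_{m=1, m≠j}^{M}(λ_m−λ_j)] = ∏_{m=1}^{N}(μ_m−λ_s−ic)/∏_{m=1}^{M}(λ_m−λ_s−ic) − ∏_{m=1}^{N}(μ_m−λ_s+ic)/∏_{m=1}^{M}(λ_m−λ_s+ic). -/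
open Complex Finset

/-! Partial fractions replace the residue theorem: if `deg P ≤ deg Q` and `Q` has simple roots
`v j`, then `P / Q` is a constant plus a combination of the `1 / (x - v j)`. The constant, which is
the contribution of infinity, cancels between the values of `P / Q` at `ls + ic` and `ls - ic`, and
the differences of the `1 / (x - v j)` produce the kernel `2ic / ((ls - v j) ^ 2 + c ^ 2)`. -/

section PartialFractions

open Polynomial Lagrange

variable {F ι κ : Type*} [Field F] {s : Finset ι} {v : ι → F} {P : F[X]} {x y : F}

lemma degree_sub_C_coeff_mul_nodal_lt (hP : P.natDegree ≤ #s) :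
    (P - C (P.coeff #s) * nodal s v).degree < #s := by
  have hnodal : (nodal s v).coeff #s = 1 := by
    simpa only [natDegree_nodal] using (nodal_monic (s := s) (v := v)).coeff_natDegree
  have hle : (P - C (P.coeff #s) * nodal s v).natDegree ≤ #s :=
    (natDegree_sub_le_of_le hP (natDegree_C_mul_le _ _)).trans (by simp)
  rw [degree_lt_iff_coeff_zero]
  intro n hn
  obtain rfl | hlt := hn.eq_or_lt
  · simp [hnodal]
  · exact coeff_eq_zero_of_natDegree_lt (hle.trans_lt hlt)

variable [DecidableEq ι]

lemma eval_div_eval_nodal_eq_coeff_add_sum (hv : Set.InjOn v s) (hP : P.natDegree ≤ #s)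
    (hx : ∀ j ∈ s, x ≠ v j) :
    P.eval x / (nodal s v).eval x =
      P.coeff #s + ∑ j ∈ s, nodalWeight s v j * (x - v j)⁻¹ * P.eval (v j) := by
  have hinterp : P - C (P.coeff #s) * nodal s v = interpolate s v fun j => P.eval (v j) :=
    eq_interpolate_of_eval_eq _ hv (degree_sub_C_coeff_mul_nodal_lt hP) fun j hj => by
      simp [eval_nodal_at_node hj]
  have heval := congrArg (eval x) hinterp
  rw [eval_interpolate_not_at_node _ hx, eval_sub, eval_mul, eval_C] at heval
  rw [div_eq_iff (eval_nodal_not_at_node hx)]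
  linear_combination heval

lemma eval_div_eval_nodal_sub_eq_sum (hv : Set.InjOn v s) (hP : P.natDegree ≤ #s)
    (hx : ∀ j ∈ s, x ≠ v j) (hy : ∀ j ∈ s, y ≠ v j) :
    P.eval x / (nodal s v).eval x - P.eval y / (nodal s v).eval y =
      ∑ j ∈ s, (y - x) / ((x - v j) * (y - v j)) * (nodalWeight s v j * P.eval (v j)) := by
  rw [eval_div_eval_nodal_eq_coeff_add_sum hv hP hx, eval_div_eval_nodal_eq_coeff_add_sum hv hP hy,
    add_sub_add_left_eq_sub, ← sum_sub_distrib]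
  refine sum_congr rfl fun j hj => ?_
  rw [← sub_sub_sub_cancel_right y x (v j),
    ← inv_sub_inv (sub_ne_zero.2 (hx j hj)) (sub_ne_zero.2 (hy j hj))]
  ring

lemma prod_sub_div_prod_sub_sub_eq_sum {t : Finset κ} (hts : #t ≤ #s) (hv : Set.InjOn v s)
    (w : κ → F) (hx : ∀ j ∈ s, x ≠ v j) (hy : ∀ j ∈ s, y ≠ v j) :
    (∏ m ∈ t, (x - w m)) / (∏ m ∈ s, (x - v m)) - (∏ m ∈ t, (y - w m)) / (∏ m ∈ s, (y - v m)) =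
      ∑ j ∈ s, (y - x) / ((x - v j) * (y - v j)) *
        ((∏ m ∈ t, (v j - w m)) / ∏ m ∈ s.erase j, (v j - v m)) := by
  have hdeg : (nodal t w).natDegree ≤ #s := natDegree_nodal.trans_le hts
  simpa only [eval_nodal, nodalWeight, prod_inv_distrib, inv_mul_eq_div] using
    eval_div_eval_nodal_sub_eq_sum hv hdeg hx hy

end PartialFractions

theorem residue_sum_identity_general {F ι κ : Type*} [Field F] [DecidableEq ι]
    {i : F} (hi : i ^ 2 = -1) {s : Finset ι} {t : Finset κ} (hts : #t ≤ #s)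
    {lam : ι → F} (hlam : Set.InjOn lam s) (μ : κ → F) (c ls : F)
    (hls : ∀ j ∈ s, (ls - lam j) ^ 2 + c ^ 2 ≠ 0) :
    i * ∑ j ∈ s, 2 * c / ((ls - lam j) ^ 2 + c ^ 2) *
        ((∏ m ∈ t, (μ m - lam j)) / ∏ m ∈ s.erase j, (lam m - lam j)) =
      (∏ m ∈ t, (μ m - ls - i * c)) / (∏ m ∈ s, (lam m - ls - i * c)) -
        (∏ m ∈ t, (μ m - ls + i * c)) / (∏ m ∈ s, (lam m - ls + i * c)) := by
  have hfactor (j : ι) :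
      (ls - lam j) ^ 2 + c ^ 2 = (lam j - ls - i * c) * (lam j - ls + i * c) := by
    linear_combination c ^ 2 * hi
  have hplus : ∀ j ∈ s, -(ls + i * c) ≠ -lam j := fun j hj h =>
    hls j hj (by linear_combination hfactor j + (lam j - ls + i * c) * h)
  have hminus : ∀ j ∈ s, -(ls - i * c) ≠ -lam j := fun j hj h =>
    hls j hj (by linear_combination hfactor j + (lam j - ls - i * c) * h)
  -- The differences here are `lam m - x` rather than `x - lam m`, so all points are negated.
  have hsum := prod_sub_div_prod_sub_sub_eq_sum hts (neg_injective.comp_injOn hlam)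
    (fun m => -μ m) hplus hminus
  simp only [Function.comp_apply, neg_sub_neg, ← sub_sub, ← sub_add, ← hfactor] at hsum
  rw [hsum, mul_sum]
  refine sum_congr rfl fun j _ => ?_
  ring

/-- Residue-sum identity: for `N ≤ M`, pairwise distinct `λ₁,…,λ_M`, arbitrary `μ₁,…,μ_N`,
`c ≠ 0` and `λ_s` with `(λ_s−λ_j)² + c² ≠ 0` for all `j`,
`i·Σ_j [2c/((λ_s−λ_j)²+c²)]·[∏_m(μ_m−λ_j)/∏_{m≠j}(λ_m−λ_j)]
  = ∏_m(μ_m−λ_s−ic)/∏_m(λ_m−λ_s−ic) − ∏_m(μ_m−λ_s+ic)/∏_m(λ_m−λ_s+ic)`. -/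
theorem residue_sum_identity {N M : ℕ} (hNM : N ≤ M)
    (lam : Fin M → ℂ) (hlam : Function.Injective lam)
    (μ : Fin N → ℂ) (c : ℂ) (hc : c ≠ 0) (ls : ℂ)
    (hls : ∀ j, (ls - lam j) ^ 2 + c ^ 2 ≠ 0) :
    I * ∑ j, 2 * c / ((ls - lam j) ^ 2 + c ^ 2) *
        ((∏ m, (μ m - lam j)) / ∏ m ∈ Finset.univ.erase j, (lam m - lam j)) =
      (∏ m, (μ m - ls - I * c)) / (∏ m, (lam m - ls - I * c)) -
        (∏ m, (μ m - ls + I * c)) / (∏ m, (lam m - ls + I * c)) :=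
  residue_sum_identity_general I_sq (by simpa using hNM) hlam.injOn μ c ls fun j _ => hls j
end

section
/- Let N be a positive integer, let λ_1,…,λ_N be pairwise distinct complex numbers and let c ∈ ℂ be arbitrary. Then Σ_{k=1}^{N} ∏_{m=1, m≠k}^{N} (λ_k−λ_m+ic)/(λ_k−λ_m) = N. -/
open Complex Finset

/-!
Let `P` be monic of degree `n` and let `Q = ∏ⱼ (X - vⱼ)` have `n` distinct roots. Then `P - Q` has
degree less than `n` and takes the value `P(vᵢ)` at `vᵢ`, so comparing coefficients of `X ^ (n - 1)`
in its Lagrange interpolation formula evaluates `∑ᵢ P(vᵢ) / ∏_{j ≠ i} (vᵢ - vⱼ)`. For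
`P(X) = Q(X + a)` the `i`-th summand is `a` times the product of the `(vᵢ - vⱼ + a) / (vᵢ - vⱼ)`
over `j ≠ i`, and the sum evaluates to `n * a`, from which a nonzero `a` cancels.
-/

open Polynomial

section CommRing

variable {ι R : Type*} [CommRing R] {s : Finset ι} {v : ι → R}

lemma nextCoeff_nodal : (Lagrange.nodal s v).nextCoeff = -∑ i ∈ s, v i := by
  rw [Lagrange.nodal_eq, prod_X_sub_C_nextCoeff]

lemma degree_sub_nodal_lt [Nontrivial R] {f : R[X]} (hf : f.Monic) (hdeg : f.natDegree = #s) :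
    (f - Lagrange.nodal s v).degree < #s := by
  have hdeg_eq : f.degree = (Lagrange.nodal s v).degree := by
    rw [degree_eq_natDegree hf.ne_zero, hdeg, Lagrange.degree_nodal]
  calc (f - Lagrange.nodal s v).degree
      < (Lagrange.nodal s v).degree :=
        degree_sub_lt_right hdeg_eq Lagrange.nodal_ne_zero (hf.trans Lagrange.nodal_monic.symm)
    _ = #s := Lagrange.degree_nodal

lemma eval_nodal_sub_const_at_node [DecidableEq ι] (a : R) {i : ι} (hi : i ∈ s) :
    (Lagrange.nodal s fun j ↦ v j - a).eval (v i) = a * ∏ j ∈ s.erase i, (v i - v j + a) := by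
  rw [Lagrange.eval_nodal, ← mul_prod_erase s _ hi, sub_sub_cancel]
  simp only [sub_sub_eq_add_sub, sub_add_eq_add_sub]

end CommRing

section Field

variable {ι F : Type*} [DecidableEq ι] [Field F] {s : Finset ι} {v : ι → F}

lemma sum_eval_div_prod_sub_of_monic {f : F[X]} (hv : Set.InjOn v s) (hf : f.Monic)
    (hdeg : f.natDegree = #s) :
    ∑ i ∈ s, f.eval (v i) / ∏ j ∈ s.erase i, (v i - v j) = f.nextCoeff + ∑ i ∈ s, v i := by
  obtain rfl | hs := s.eq_empty_or_nonempty
  · simp [nextCoeff, hdeg]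
  have hcard : 0 < #s := hs.card_pos
  calc ∑ i ∈ s, f.eval (v i) / ∏ j ∈ s.erase i, (v i - v j)
      = ∑ i ∈ s, (f - Lagrange.nodal s v).eval (v i) / ∏ j ∈ s.erase i, (v i - v j) :=
        sum_congr rfl fun i hi ↦ by rw [eval_sub, Lagrange.eval_nodal_at_node hi, sub_zero]
    _ = (f - Lagrange.nodal s v).coeff (#s - 1) :=
        (Lagrange.coeff_eq_sum hv (degree_sub_nodal_lt hf hdeg)).symm
    _ = f.nextCoeff - (Lagrange.nodal s v).nextCoeff := by
        rw [coeff_sub, nextCoeff_of_natDegree_pos (hdeg ▸ hcard),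
          nextCoeff_of_natDegree_pos (Lagrange.natDegree_nodal (s := s) (v := v) ▸ hcard), hdeg,
          Lagrange.natDegree_nodal]
    _ = f.nextCoeff + ∑ i ∈ s, v i := by rw [nextCoeff_nodal, sub_neg_eq_add]

lemma mul_sum_prod_sub_add_div_sub (hv : Set.InjOn v s) (a : F) :
    a * ∑ i ∈ s, ∏ j ∈ s.erase i, ((v i - v j + a) / (v i - v j)) = a * #s := by
  calc a * ∑ i ∈ s, ∏ j ∈ s.erase i, ((v i - v j + a) / (v i - v j))
      = ∑ i ∈ s, (Lagrange.nodal s fun j ↦ v j - a).eval (v i) /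
          ∏ j ∈ s.erase i, (v i - v j) := by
        rw [mul_sum]
        refine sum_congr rfl fun i hi ↦ ?_
        rw [eval_nodal_sub_const_at_node a hi, prod_div_distrib, mul_div_assoc]
    _ = -∑ i ∈ s, (v i - a) + ∑ i ∈ s, v i := by
        rw [sum_eval_div_prod_sub_of_monic hv Lagrange.nodal_monic Lagrange.natDegree_nodal,
          nextCoeff_nodal]
    _ = a * #s := by
        rw [sum_sub_distrib, sum_const, nsmul_eq_mul]
        ring

lemma sum_prod_sub_div_sub_self (hv : Set.InjOn v s) :
    ∑ i ∈ s, ∏ j ∈ s.erase i, ((v i - v j) / (v i - v j)) = #s := by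
  have hprod : ∀ i ∈ s, ∏ j ∈ s.erase i, ((v i - v j) / (v i - v j)) = 1 := fun i hi ↦
    prod_eq_one fun j hj ↦ div_self <| sub_ne_zero.mpr fun h ↦
      ne_of_mem_erase hj (hv (mem_of_mem_erase hj) hi h.symm)
  rw [sum_congr rfl hprod, sum_const, nsmul_one]

theorem sum_scattering_factors_general (hv : Set.InjOn v s) (a : F) :
    ∑ i ∈ s, ∏ j ∈ s.erase i, ((v i - v j + a) / (v i - v j)) = #s := by
  obtain rfl | ha := eq_or_ne a 0
  · simpa only [add_zero] using sum_prod_sub_div_sub_self hv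
  · exact mul_left_cancel₀ ha (mul_sum_prod_sub_add_div_sub hv a)

end Field

/-- For a positive integer `N`, pairwise distinct `λ₁,…,λ_N` and arbitrary `c ∈ ℂ`,
`Σ_k ∏_{m≠k} (λ_k−λ_m+ic)/(λ_k−λ_m) = N`. -/
theorem sum_scattering_factors {N : ℕ} (hN : 0 < N)
    (lam : Fin N → ℂ) (hlam : Function.Injective lam) (c : ℂ) :
    ∑ k, ∏ m ∈ Finset.univ.erase k, ((lam k - lam m + I * c) / (lam k - lam m)) =
      (N : ℂ) := by
  rw [sum_scattering_factors_general hlam.injOn, card_univ, Fintype.card_fin]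
end

section
/- Fix c ∈ ℂ with c ≠ 0, an integer R ≥ 1, and an integer N ≥ 0. Let μ_1,…,μ_N be complex numbers, λ_1,…,λ_{N+R} pairwise distinct complex numbers with μ_k ≠ λ_j and λ_m−λ_j±ic ≠ 0 for all indices, and let λ_p, λ_p′, λ_s, λ_s′ ∈ ℂ be any parameters such that all quantities below are well defined (i.e. (x−λ_j)²+c² ≠ 0 and Ṽ⁺_x ≠ Ṽ⁻_x for x ∈ {λ_p, λ_p′, λ_s, λ_s′}, and Ṽ⁺_j ≠ Ṽ⁻_j for all j). Then H_R(μ;λ;λ_p,λ_s) = H_R(μ;λ;λ_p′,λ_s′); that is, the expression H_R is independent of the auxiliary parameters λ_p and λ_s. -/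
open Complex Finset Matrix

namespace LL

noncomputable def Kk (c x y : ℂ) : ℂ := 2 * c / ((x - y) ^ 2 + c ^ 2)

noncomputable def Vp {N M : ℕ} (c : ℂ) (μ : Fin N → ℂ) (lam : Fin M → ℂ) (x : ℂ) : ℂ :=
  (∏ m, (μ m - x + I * c)) / ∏ m, (lam m - x + I * c)

noncomputable def Vm {N M : ℕ} (c : ℂ) (μ : Fin N → ℂ) (lam : Fin M → ℂ) (x : ℂ) : ℂ :=
  (∏ m, (μ m - x - I * c)) / ∏ m, (lam m - x - I * c)

noncomputable def Xi {N M : ℕ} (μ : Fin N → ℂ) (lam : Fin M → ℂ) (j : Fin M) : ℂ :=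
  (∏ m, (μ m - lam j)) / ∏ m ∈ Finset.univ.erase j, (lam m - lam j)

noncomputable def Umat {N M : ℕ} (c : ℂ) (μ : Fin N → ℂ) (lam : Fin M → ℂ) (lp ls : ℂ) :
    Matrix (Fin M) (Fin M) ℂ := fun j k =>
  I / (Vp c μ lam (lam j) - Vm c μ lam (lam j)) * Xi μ lam j *
    (Kk c (lam j) (lam k) - Kk c lp (lam k) * Kk c ls (lam j))

noncomputable def U1mat {N M : ℕ} (c : ℂ) (μ : Fin N → ℂ) (lam : Fin M → ℂ) (lp : ℂ) :
    Matrix (Fin M) (Fin M) ℂ := fun j k =>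
  I / (Vp c μ lam (lam j) - Vm c μ lam (lam j)) * Xi μ lam j *
    (Kk c (lam j) (lam k) - Kk c lp (lam k))

noncomputable def U2mat {N M : ℕ} (c : ℂ) (μ : Fin N → ℂ) (lam : Fin M → ℂ) (lp : ℂ) :
    Matrix (Fin M) (Fin M) ℂ := fun j k =>
  U1mat c μ lam lp j k + I / (Vp c μ lam (lam j) - Vm c μ lam (lam j)) * Kk c lp (lam k)

noncomputable def HR {N M : ℕ} (c sc : ℂ) (R : ℕ) (μ : Fin N → ℂ) (lam : Fin M → ℂ)
    (lp ls : ℂ) : ℂ :=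
  (I * sc) ^ R / (c ^ (2 * R - 1) * ((R - 1).factorial : ℂ)) * (-1 : ℂ) ^ (N * (R - 1)) *
    (∏ j, ∏ k, (lam j - lam k + I * c)) *
    (∏ j, ∏ k, (lam j - μ k)⁻¹) *
    (∏ j, (Vp c μ lam (lam j) - Vm c μ lam (lam j))) *
    (1 + Umat c μ lam lp ls).det /
    ((Vp c μ lam lp - Vm c μ lam lp) * (Vp c μ lam ls - Vm c μ lam ls))

noncomputable def Jcal {N : ℕ} (μ lam : Fin N → ℂ) : ℂ :=
  (∑ j, lam j - ∑ j, μ j) ^ 4 -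
    4 * (∑ j, lam j - ∑ j, μ j) * (∑ j, lam j ^ 3 - ∑ j, μ j ^ 3) +
    3 * (∑ j, lam j ^ 2 - ∑ j, μ j ^ 2) ^ 2

noncomputable def Fff {N : ℕ} (c : ℂ) (μ lam : Fin N → ℂ) (lp ls : ℂ) : ℂ :=
  (-1 : ℂ) ^ N * (Jcal μ lam / (6 * c)) *
    (∏ j, ∏ k, (lam j - lam k + I * c)) *
    (∏ j, ∏ k, (lam j - μ k)⁻¹) *
    (∏ j, (Vp c μ lam (lam j) - Vm c μ lam (lam j))) *
    (1 + Umat c μ lam lp ls).det /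
    ((Vp c μ lam lp - Vm c μ lam lp) * (Vp c μ lam ls - Vm c μ lam ls))

noncomputable def Tcal {N M : ℕ} (μ : Fin N → ℂ) (lam : Fin M → ℂ) : ℂ :=
  (1 / 2 : ℂ) * ((∑ j, lam j - ∑ j, μ j) ^ 2 - (∑ j, lam j ^ 2 - ∑ j, μ j ^ 2))

noncomputable def Gff {N M : ℕ} (c sc : ℂ) (μ : Fin N → ℂ) (lam : Fin M → ℂ) (lp ls : ℂ) : ℂ :=
  -I * (Tcal μ lam / (c * sc)) *
    (∏ j, ∏ k, (lam j - lam k + I * c)) *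
    (∏ j, ∏ k, (lam j - μ k)⁻¹) *
    (∏ j, (Vp c μ lam (lam j) - Vm c μ lam (lam j))) *
    (1 + Umat c μ lam lp ls).det /
    ((Vp c μ lam lp - Vm c μ lam lp) * (Vp c μ lam ls - Vm c μ lam ls))

noncomputable def fsc (c x y : ℂ) : ℂ := (x - y + I * c) / (x - y)

noncomputable def stringRap (cb : ℝ) (M : ℕ) (δ : Fin M → ℂ) (j : Fin M) : ℂ :=
  I * ((cb : ℂ) / 2) * ((M : ℂ) - 1 - 2 * (j.val : ℂ)) + I * δ j

end LL

open LL

/-!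
Multiplying `1 + Ũ` by `diag(Vⱼ⁺ - Vⱼ⁻)` gives `A + w pᵀ`, where `A` contains neither auxiliary
parameter, `p` depends only on `λ_p` and `w` only on `λ_s`. Expanding the rational function
`∏ (μₘ - y) / ∏ (λₘ - y)` into partial fractions yields `∑ⱼ Ξⱼ K(x, λⱼ) = i (Vₓ⁺ - Vₓ⁻)`. At
`x = λₖ` this sum rule says that `A` annihilates `(1, …, 1)` from the left and `Ξ` from the right;
hence `det (A + w pᵀ)` is proportional to `(∑ⱼ wⱼ) (∑ⱼ Ξⱼ pⱼ)`, and at `x = λ_p, λ_s` the sum rule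
identifies that product with `i (V_p⁺ - V_p⁻) (V_s⁺ - V_s⁻)`, which `H_R` divides out.
-/

section RankOneUpdate

variable {K n : Type*} [Field K] [Fintype n] [DecidableEq n] {A : Matrix n n K} {u v : n → K}

theorem det_one_add_vecMulVec (w v : n → K) : (1 + vecMulVec w v).det = 1 + v ⬝ᵥ w := by
  rw [vecMulVec_eq Unit, det_one_add_replicateCol_mul_replicateRow]

theorem det_add_vecMulVec_eq_of_vecMul_eq_zero (hA : v ᵥ* A = 0) (w p : n → K) {w' : n → K}
    (hw' : v ⬝ᵥ w' ≠ 0) :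
    (A + vecMulVec w p).det = v ⬝ᵥ w / v ⬝ᵥ w' * (A + vecMulVec w' p).det := by
  set T : Matrix n n K := 1 + vecMulVec ((v ⬝ᵥ w')⁻¹ • (w - w')) v with hT
  -- `T` fixes every vector orthogonal to `v`, in particular the columns of `A`.
  have hTA : T * A = A := by
    rw [hT, add_mul, one_mul, vecMulVec_mul, hA, vecMulVec_zero, add_zero]
  have hTw' : T *ᵥ w' = w := by
    rw [hT, add_mulVec, one_mulVec, vecMulVec_mulVec, op_smul_eq_smul, smul_inv_smul₀ hw',
      add_sub_cancel]
  have hdetT : T.det = v ⬝ᵥ w / v ⬝ᵥ w' := by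
    rw [hT, det_one_add_vecMulVec, dotProduct_smul, dotProduct_sub, smul_eq_mul]
    field_simp
    ring
  rw [← hdetT, ← det_mul, mul_add, hTA, mul_vecMulVec, hTw']

theorem det_add_vecMulVec_eq_of_mulVec_eq_zero (hA : A *ᵥ u = 0) (w p : n → K) {p' : n → K}
    (hp' : u ⬝ᵥ p' ≠ 0) :
    (A + vecMulVec w p).det = u ⬝ᵥ p / u ⬝ᵥ p' * (A + vecMulVec w p').det := by
  have hAt : u ᵥ* Aᵀ = 0 := by rw [vecMul_transpose, hA]
  simpa only [← transpose_vecMulVec w, ← transpose_add, det_transpose] using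
    det_add_vecMulVec_eq_of_vecMul_eq_zero hAt p w hp'

theorem det_add_vecMulVec_div_eq (hv : v ᵥ* A = 0) (hu : A *ᵥ u = 0) {w w' p p' : n → K}
    (hw : v ⬝ᵥ w ≠ 0) (hw' : v ⬝ᵥ w' ≠ 0) (hp : u ⬝ᵥ p ≠ 0) (hp' : u ⬝ᵥ p' ≠ 0) :
    (A + vecMulVec w p).det / (v ⬝ᵥ w * u ⬝ᵥ p) =
      (A + vecMulVec w' p').det / (v ⬝ᵥ w' * u ⬝ᵥ p') := by
  rw [det_add_vecMulVec_eq_of_vecMul_eq_zero hv w p hw',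
    det_add_vecMulVec_eq_of_mulVec_eq_zero hu w' p hp']
  field_simp

end RankOneUpdate

theorem eval_div_eval_nodal_eq_sum {F ι : Type*} [Field F] [DecidableEq ι] {s : Finset ι}
    {v : ι → F} {f : Polynomial F} {x : F} (hvs : Set.InjOn v s) (hf : f.degree < #s)
    (hx : ∀ i ∈ s, x ≠ v i) :
    f.eval x / (Lagrange.nodal s v).eval x =
      ∑ i ∈ s, Lagrange.nodalWeight s v i * (x - v i)⁻¹ * f.eval (v i) := by
  have hinterp : f.eval x = (Lagrange.interpolate s v fun i => f.eval (v i)).eval x :=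
    congrArg (Polynomial.eval x) (Lagrange.eq_interpolate hvs hf)
  rw [hinterp, Lagrange.eval_interpolate_not_at_node _ hx,
    mul_div_cancel_left₀ _ (Lagrange.eval_nodal_not_at_node hx)]

namespace LL

variable {N M : ℕ} {c : ℂ} {μ : Fin N → ℂ} {lam : Fin M → ℂ}

theorem sq_add_sq_eq_mul (c x y : ℂ) :
    (x - y) ^ 2 + c ^ 2 = (y - (x - I * c)) * (y - (x + I * c)) := by
  linear_combination c ^ 2 * I_sq

theorem Kk_comm (c x y : ℂ) : Kk c x y = Kk c y x := by
  rw [Kk, Kk, sub_sq_comm]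

theorem Kk_eq_sub_inv {x y : ℂ} (h : (x - y) ^ 2 + c ^ 2 ≠ 0) :
    Kk c x y = I * ((y - (x - I * c))⁻¹ - (y - (x + I * c))⁻¹) := by
  rw [sq_add_sq_eq_mul] at h
  rw [Kk, sq_add_sq_eq_mul, inv_sub_inv (left_ne_zero_of_mul h) (right_ne_zero_of_mul h),
    mul_div_assoc']
  congr 1
  linear_combination 2 * c * I_sq

theorem prod_sub_div_prod_sub_eq_sum_Xi (hNM : N < M) (hinj : Function.Injective lam) {y : ℂ}
    (hy : ∀ j, lam j - y ≠ 0) :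
    (∏ m, (μ m - y)) / ∏ m, (lam m - y) = ∑ j, Xi μ lam j * (lam j - y)⁻¹ := by
  have hnodes : Set.InjOn (-lam) (univ : Finset (Fin M)) := (neg_injective.comp hinj).injOn
  have hdeg : (Lagrange.nodal univ (-μ)).degree < #(univ : Finset (Fin M)) := by
    simpa only [Lagrange.degree_nodal, card_univ, Fintype.card_fin, Nat.cast_lt] using hNM
  have hne : ∀ j ∈ univ, -y ≠ (-lam) j := fun j _ h => hy j (by simp [neg_injective h])
  have hpf := eval_div_eval_nodal_eq_sum hnodes hdeg hne
  simp only [Lagrange.eval_nodal, Lagrange.nodalWeight, Pi.neg_apply, neg_sub_neg,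
    prod_inv_distrib] at hpf
  rw [hpf]
  exact sum_congr rfl fun j _ => by rw [Xi]; ring

/-- The difference `Vₓ⁺ - Vₓ⁻`, which occurs at the `λⱼ` and at the auxiliary parameters. -/
noncomputable def Vdiff (c : ℂ) (μ : Fin N → ℂ) (lam : Fin M → ℂ) (x : ℂ) : ℂ :=
  Vp c μ lam x - Vm c μ lam x

theorem sum_Xi_mul_Kk (hNM : N < M) (hinj : Function.Injective lam) {x : ℂ}
    (hx : ∀ j, (x - lam j) ^ 2 + c ^ 2 ≠ 0) :
    ∑ j, Xi μ lam j * Kk c x (lam j) = I * Vdiff c μ lam x := by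
  have hfactor : ∀ j, (lam j - (x - I * c)) * (lam j - (x + I * c)) ≠ 0 := fun j =>
    sq_add_sq_eq_mul c x (lam j) ▸ hx j
  have hVp : Vp c μ lam x = ∑ j, Xi μ lam j * (lam j - (x - I * c))⁻¹ := by
    rw [← prod_sub_div_prod_sub_eq_sum_Xi hNM hinj fun j => left_ne_zero_of_mul (hfactor j)]
    simp only [Vp, sub_sub_eq_add_sub, add_sub_right_comm]
  have hVm : Vm c μ lam x = ∑ j, Xi μ lam j * (lam j - (x + I * c))⁻¹ := by
    rw [← prod_sub_div_prod_sub_eq_sum_Xi hNM hinj fun j => right_ne_zero_of_mul (hfactor j)]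
    simp only [Vm, sub_sub]
  rw [Vdiff, hVp, hVm, ← sum_sub_distrib, mul_sum]
  exact sum_congr rfl fun j _ => by rw [Kk_eq_sub_inv (hx j)]; ring

/-- The part of `diag(Vⱼ⁺ - Vⱼ⁻) (1 + Ũ)` that does not involve the auxiliary parameters. -/
noncomputable def coreMatrix (c : ℂ) (μ : Fin N → ℂ) (lam : Fin M → ℂ) :
    Matrix (Fin M) (Fin M) ℂ :=
  diagonal (fun j => Vdiff c μ lam (lam j)) +
    of fun j k => I * Xi μ lam j * Kk c (lam j) (lam k)

/-- The column of the rank-one part of `diag(Vⱼ⁺ - Vⱼ⁻) (1 + Ũ)`, with parameter `λ_s = x`. -/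
noncomputable def auxColumn (c : ℂ) (μ : Fin N → ℂ) (lam : Fin M → ℂ) (x : ℂ) : Fin M → ℂ :=
  fun j => -I * Xi μ lam j * Kk c x (lam j)

/-- The row of the rank-one part of `diag(Vⱼ⁺ - Vⱼ⁻) (1 + Ũ)`, with parameter `λ_p = x`. -/
noncomputable def auxRow (c : ℂ) (lam : Fin M → ℂ) (x : ℂ) : Fin M → ℂ :=
  fun k => Kk c x (lam k)

theorem diagonal_Vdiff_mul_one_add_Umat (hV : ∀ j, Vdiff c μ lam (lam j) ≠ 0) (lp ls : ℂ) :
    diagonal (fun j => Vdiff c μ lam (lam j)) * (1 + Umat c μ lam lp ls) =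
      coreMatrix c μ lam + vecMulVec (auxColumn c μ lam ls) (auxRow c lam lp) := by
  rw [coreMatrix, mul_add, mul_one, add_assoc]
  congr 1
  ext j k
  have hVj := hV j
  simp only [diagonal_mul, Umat, Matrix.add_apply, of_apply, vecMulVec_apply, auxColumn, auxRow]
  rw [← Vdiff]
  field_simp
  ring

theorem one_vecMul_coreMatrix (hNM : N < M) (hinj : Function.Injective lam)
    (hlam : ∀ k j, (lam k - lam j) ^ 2 + c ^ 2 ≠ 0) : 1 ᵥ* coreMatrix c μ lam = 0 := by
  ext k
  calc (1 ᵥ* coreMatrix c μ lam) k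
      = Vdiff c μ lam (lam k) + I * ∑ j, Xi μ lam j * Kk c (lam k) (lam j) := by
        rw [coreMatrix, vecMul_add, Pi.add_apply, vecMul_diagonal]
        simp only [Pi.one_apply, one_mul, vecMul, dotProduct, of_apply, mul_sum, mul_assoc,
          Kk_comm c (lam k)]
    _ = 0 := by
        rw [sum_Xi_mul_Kk hNM hinj (hlam k)]
        linear_combination Vdiff c μ lam (lam k) * I_sq

theorem coreMatrix_mulVec_Xi (hNM : N < M) (hinj : Function.Injective lam)
    (hlam : ∀ k j, (lam k - lam j) ^ 2 + c ^ 2 ≠ 0) : coreMatrix c μ lam *ᵥ Xi μ lam = 0 := by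
  ext j
  calc (coreMatrix c μ lam *ᵥ Xi μ lam) j
      = Vdiff c μ lam (lam j) * Xi μ lam j +
          I * Xi μ lam j * ∑ k, Xi μ lam k * Kk c (lam j) (lam k) := by
        rw [coreMatrix, add_mulVec, Pi.add_apply, mulVec_diagonal]
        simp only [mulVec, dotProduct, of_apply, mul_sum, mul_assoc, mul_comm (Kk c _ _)]
    _ = 0 := by
        rw [sum_Xi_mul_Kk hNM hinj (hlam j)]
        linear_combination Vdiff c μ lam (lam j) * Xi μ lam j * I_sq

theorem one_dotProduct_auxColumn (hNM : N < M) (hinj : Function.Injective lam) {x : ℂ}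
    (hx : ∀ j, (x - lam j) ^ 2 + c ^ 2 ≠ 0) :
    1 ⬝ᵥ auxColumn c μ lam x = Vdiff c μ lam x := by
  simp only [one_dotProduct, auxColumn, mul_assoc, ← mul_sum]
  rw [sum_Xi_mul_Kk hNM hinj hx]
  linear_combination -Vdiff c μ lam x * I_sq

theorem det_one_add_Umat_div_eq (hNM : N < M) (hinj : Function.Injective lam)
    (hlam : ∀ k j, (lam k - lam j) ^ 2 + c ^ 2 ≠ 0) (hV : ∀ j, Vdiff c μ lam (lam j) ≠ 0)
    {lp lp' ls ls' : ℂ}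
    (haux : ∀ x ∈ ({lp, lp', ls, ls'} : Set ℂ),
      (∀ j, (x - lam j) ^ 2 + c ^ 2 ≠ 0) ∧ Vdiff c μ lam x ≠ 0) :
    (1 + Umat c μ lam lp ls).det / (Vdiff c μ lam lp * Vdiff c μ lam ls) =
      (1 + Umat c μ lam lp' ls').det / (Vdiff c μ lam lp' * Vdiff c μ lam ls') := by
  simp only [Set.forall_mem_insert, Set.mem_singleton_iff, forall_eq] at haux
  obtain ⟨⟨hlp, hVlp⟩, ⟨hlp', hVlp'⟩, ⟨hls, hVls⟩, hls', hVls'⟩ := haux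
  have hdet (p s : ℂ) : (∏ j, Vdiff c μ lam (lam j)) * (1 + Umat c μ lam p s).det =
      (coreMatrix c μ lam + vecMulVec (auxColumn c μ lam s) (auxRow c lam p)).det := by
    rw [← diagonal_Vdiff_mul_one_add_Umat hV, det_mul, det_diagonal]
  have hcol {x : ℂ} (hx : ∀ j, (x - lam j) ^ 2 + c ^ 2 ≠ 0) :
      1 ⬝ᵥ auxColumn c μ lam x = Vdiff c μ lam x := one_dotProduct_auxColumn hNM hinj hx
  have hrow {x : ℂ} (hx : ∀ j, (x - lam j) ^ 2 + c ^ 2 ≠ 0) :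
      Xi μ lam ⬝ᵥ auxRow c lam x = I * Vdiff c μ lam x := sum_Xi_mul_Kk hNM hinj hx
  have hrank_one := det_add_vecMulVec_div_eq (one_vecMul_coreMatrix (μ := μ) hNM hinj hlam)
    (coreMatrix_mulVec_Xi hNM hinj hlam)
    (hcol hls ▸ hVls) (hcol hls' ▸ hVls')
    (hrow hlp ▸ mul_ne_zero I_ne_zero hVlp) (hrow hlp' ▸ mul_ne_zero I_ne_zero hVlp')
  rw [hcol hls, hcol hls', hrow hlp, hrow hlp', ← hdet, ← hdet] at hrank_one
  have hprod : ∏ j, Vdiff c μ lam (lam j) ≠ 0 := prod_ne_zero_iff.2 fun j _ => hV j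
  field_simp at hrank_one ⊢
  linear_combination hrank_one

end LL

/-- The determinant formula `H_R` for the form factor of `Ψ^R(0)` is independent of the
auxiliary parameters `λ_p` and `λ_s`. -/
theorem HR_independent_of_aux {N R : ℕ} (c sc : ℂ) (hc : c ≠ 0) (hsc : sc ^ 2 = c)
    (hR : 1 ≤ R) (μ : Fin N → ℂ) (lam : Fin (N + R) → ℂ)
    (hinj : Function.Injective lam)
    (hmulam : ∀ k j, μ k ≠ lam j)
    (hpm : ∀ m j, lam m - lam j + I * c ≠ 0 ∧ lam m - lam j - I * c ≠ 0)
    (lp lp' ls ls' : ℂ)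
    (haux : ∀ x ∈ ({lp, lp', ls, ls'} : Set ℂ),
      (∀ j, (x - lam j) ^ 2 + c ^ 2 ≠ 0) ∧ Vp c μ lam x ≠ Vm c μ lam x)
    (hV : ∀ j, Vp c μ lam (lam j) ≠ Vm c μ lam (lam j)) :
    HR c sc R μ lam lp ls = HR c sc R μ lam lp' ls' := by
  have hlam : ∀ k j, (lam k - lam j) ^ 2 + c ^ 2 ≠ 0 := fun k j => by
    simpa only [sq_add_sq_eq_mul, sub_sub_eq_add_sub, add_sub_right_comm, ← sub_sub] using
      mul_ne_zero (hpm j k).1 (hpm j k).2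
  have hdet := det_one_add_Umat_div_eq (Nat.lt_add_of_pos_right hR) hinj hlam
    (fun j => sub_ne_zero.2 (hV j))
    fun x hx => ⟨(haux x hx).1, sub_ne_zero.2 (haux x hx).2⟩
  simp only [Vdiff] at hdet
  rw [HR, HR, mul_div_assoc, mul_div_assoc, hdet]
end

section
/- Fix c ∈ ℂ with c ≠ 0, a square root √c of c, and an integer R ≥ 1. Let λ_1,…,λ_R be pairwise distinct complex numbers with λ_m−λ_j±ic ≠ 0 for all m ≠ j, and let λ_p, λ_s ∈ ℂ satisfy (λ_p−λ_j)²+c² ≠ 0, (λ_s−λ_j)²+c² ≠ 0, Ṽ⁺_j ≠ Ṽ⁻_j for all j, Ṽ⁺_p ≠ Ṽ⁻_p and Ṽ⁺_s ≠ Ṽ⁻_s. Then [(i√c)^R/(c^{2R−1}(R−1)!)]·∏_{j,k=1}^{R}(λ_j−λ_k+ic)·∏_{j=1}^{R}(Ṽ⁺_j−Ṽ⁻_j)·det_R(δ_{jk}+Ũ_{jk}) / [(Ṽ⁺_p−Ṽ⁻_p)(Ṽ⁺_s−Ṽ⁻_s)] = (−i√c)^R·R!. -/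
open Complex Finset Matrix

open LL

/-!
Let `T` be the translation `p(X) ↦ p(X - ic)` on polynomials of degree less than `R`, written in
terms of their values at the nodes `λ_j`, and let `E` be diagonal with entries `ω_j / P(λ_j - ic)`,
where `P = ∏ (X - λ_j)` and `ω_j` is the residue of `1 / P` at `λ_j`. The inverse of `T` is the
opposite translation, and up to diagonal weights so is its transpose; hence `(1 - T)ᵀ E (1 - T)` has
off-diagonal entries `-i ω_j ω_k K(λ_j, λ_k)`, and `1 + Ũ` is, up to diagonal factors, this Gram
matrix plus a matrix of rank one. The Gram matrix is singular because `T` fixes the constants, so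
only its adjugate contributes to the determinant of the sum. In the basis of monomials `1 - T` is
strictly triangular with superdiagonal `ic, 2 ic, …, (R - 1) ic`, which makes this adjugate a
multiple of the all-ones matrix and produces the factorials. The rank-one term thus enters through
the sums of its factors, which are multiples of `Ṽ⁺ - Ṽ⁻` at `λ_p` and `λ_s` by the partial
fractions of `1 / P`.
-/

section MatrixDeterminant

variable {R : Type*} [CommRing R] {ι : Type*} [Fintype ι] [DecidableEq ι]

theorem det_smul_one_add_vecMulVec [Nonempty ι] (r : R) (u v : ι → R) :
    (r • (1 : Matrix ι ι R) + vecMulVec u v).det =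
      r ^ (Fintype.card ι - 1) * (r + v ⬝ᵥ u) := by
  have h := eval_charpoly (vecMulVec (-u) v) r
  rw [charpoly_vecMulVec, neg_vecMulVec, sub_neg_eq_add, scalar_apply,
    ← smul_one_eq_diagonal] at h
  rw [← h, neg_dotProduct, dotProduct_comm v u, mul_add,
    pow_sub_one_mul Fintype.card_ne_zero]
  simp [mul_comm]

theorem det_add_vecMulVec_of_isRegular {A : Matrix ι ι R} (hA : IsRegular A.det) (u v : ι → R) :
    (A + vecMulVec u v).det = A.det + v ⬝ᵥ A.adjugate *ᵥ u := by
  cases isEmpty_or_nonempty ι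
  · simp
  have h := det_mul (A + vecMulVec u v) A.adjugate
  rw [add_mul, mul_adjugate, vecMulVec_mul, det_smul_one_add_vecMulVec, det_adjugate,
    mul_comm, ← dotProduct_mulVec] at h
  exact ((hA.pow _).right h).symm

theorem det_add_vecMulVec (A : Matrix ι ι R) (u v : ι → R) :
    (A + vecMulVec u v).det = A.det + v ⬝ᵥ A.adjugate *ᵥ u := by
  -- The generic perturbation `X + A` has monic, hence regular, determinant; then set `X = 0`.
  let φ := Polynomial.evalRingHom (0 : R)
  have hA : φ.mapMatrix (-A).charmatrix = A := by
    ext i j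
    by_cases h : i = j <;> simp [φ, h]
  have hu : φ ∘ Polynomial.C ∘ u = u := by ext; simp [φ]
  have hv : φ ∘ Polynomial.C ∘ v = v := by ext; simp [φ]
  have h := congrArg φ (det_add_vecMulVec_of_isRegular (charpoly_monic (-A)).isRegular
    (Polynomial.C ∘ u) (Polynomial.C ∘ v))
  have huv : φ.mapMatrix (vecMulVec (Polynomial.C ∘ u) (Polynomial.C ∘ v)) = vecMulVec u v := by
    ext; simp [φ, vecMulVec_apply]
  have hadj : φ ∘ ((-A).charmatrix.adjugate *ᵥ (Polynomial.C ∘ u)) = A.adjugate *ᵥ u := by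
    ext i
    rw [Function.comp_apply, φ.map_mulVec, hu, ← φ.mapMatrix_apply, φ.map_adjugate, hA]
  rwa [φ.map_det, map_add, map_add, φ.map_dotProduct, hadj, hv, huv,
    φ.map_det, hA] at h

theorem adjugate_of_forall_le_eq_zero {n : ℕ} {A : Matrix (Fin (n + 1)) (Fin (n + 1)) R}
    (hA : ∀ i j, j ≤ i → A i j = 0) :
    A.adjugate = single 0 (Fin.last n) ((-1) ^ n * ∏ i : Fin n, A i.castSucc i.succ) := by
  ext i j
  rw [adjugate_fin_succ_eq_det_submatrix]
  rcases eq_or_ne i 0 with rfl | hi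
  · rcases eq_or_ne j (Fin.last n) with rfl | hj
    · have hupper : (A.submatrix Fin.castSucc Fin.succ).IsUpperTriangular :=
        fun k l hlk => hA _ _ (Fin.succ_le_castSucc_iff.2 hlk)
      simp [det_of_isUpperTriangular hupper]
    · have hlast : (A.submatrix j.succAbove Fin.succ).det = 0 := by
        obtain ⟨k, hk⟩ := Fin.exists_succAbove_eq hj.symm
        exact det_eq_zero_of_row_eq_zero k fun l => hA _ _ (hk ▸ Fin.le_last _)
      simp [hlast, hj.symm]
  · have hzero : (A.submatrix j.succAbove i.succAbove).det = 0 := by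
      obtain ⟨k, hk⟩ := Fin.exists_succAbove_eq hi.symm
      exact det_eq_zero_of_column_eq_zero k fun l => hA _ _ (hk ▸ Fin.zero_le _)
    simp [hzero, hi.symm]

end MatrixDeterminant

section MonomialDifference

open Polynomial

variable {R : Type*} [CommRing R]

/-- The matrix of `p(X) ↦ p(X) - p(X + t)` in the basis of monomials `X ^ m`, `m ≤ n`. -/
noncomputable def monomialDifferenceMatrix (n : ℕ) (t : R) :
    Matrix (Fin (n + 1)) (Fin (n + 1)) R :=
  of fun l m => (X ^ (m : ℕ) - (X + C t) ^ (m : ℕ) : R[X]).coeff l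

theorem coeff_X_pow_sub_X_add_C_pow_of_le {l m : ℕ} (h : m ≤ l) (t : R) :
    (X ^ m - (X + C t) ^ m : R[X]).coeff l = 0 := by
  rcases h.eq_or_lt with rfl | h
  · simp [coeff_X_add_C_pow]
  · simp [coeff_X_add_C_pow, coeff_X_pow, h.ne', Nat.choose_eq_zero_of_lt h]

theorem adjugate_monomialDifferenceMatrix (n : ℕ) (t : R) :
    (monomialDifferenceMatrix n t).adjugate =
      single 0 (Fin.last n) ((n.factorial : R) * t ^ n) := by
  rw [adjugate_of_forall_le_eq_zero (A := monomialDifferenceMatrix n t) fun l m hml =>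
    coeff_X_pow_sub_X_add_C_pow_of_le hml t]
  have hsuper (l : Fin n) :
      monomialDifferenceMatrix n t l.castSucc l.succ = -((((l : ℕ) + 1 : ℕ) : R) * t) := by
    simp [monomialDifferenceMatrix, coeff_X_add_C_pow, coeff_X_pow, mul_comm]
  congr 1
  rw [prod_congr rfl fun l _ => hsuper l, prod_neg, prod_mul_distrib, ← mul_assoc, card_univ,
    Fintype.card_fin, ← mul_pow, Fin.prod_univ_eq_prod_range (fun l => ((l + 1 : ℕ) : R)),
    ← Nat.cast_prod, prod_range_add_one_eq_factorial]
  simp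

end MonomialDifference

section Translation

open Polynomial Lagrange

variable {K : Type*} [Field K] {ι : Type*} [Fintype ι] [DecidableEq ι]

/-- The translation `p(X) ↦ p(X + t)` on polynomials of degree less than the number of nodes `v`,
as a matrix acting on the vectors of values `(p (v j))_j`. -/
noncomputable def translationMatrix (v : ι → K) (t : K) : Matrix ι ι K :=
  of fun j k => (Lagrange.basis univ v k).eval (v j + t)

/-- The diagonal weights of the quadratic form `differenceGram`. They are meant for translations
`t` for which no `v j + t` is a node, so that the denominators do not vanish. -/
noncomputable def translationWeight (v : ι → K) (t : K) (j : ι) : K :=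
  nodalWeight univ v j / (nodal univ v).eval (v j + t)

/-- The Gram matrix of the difference operator `p(X) ↦ p(X) - p(X + t)` for the weights
`translationWeight v t`, in the coordinates of `translationMatrix`. -/
noncomputable def differenceGram (v : ι → K) (t : K) : Matrix ι ι K :=
  (1 - translationMatrix v t)ᵀ * diagonal (translationWeight v t) * (1 - translationMatrix v t)

section Nodes

variable {v : ι → K}

theorem translationMatrix_mulVec_eval (hv : Function.Injective v) {p : K[X]}
    (hp : p.degree < Fintype.card ι) (t : K) :
    translationMatrix v t *ᵥ (fun k => p.eval (v k)) = fun j => p.eval (v j + t) := by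
  ext j
  have h := congrArg (eval (v j + t)) (eq_interpolate (s := univ) hv.injOn (by simpa using hp))
  simpa [translationMatrix, mulVec, dotProduct, interpolate_apply, eval_finsetSum, mul_comm]
    using h.symm

theorem translationMatrix_zero (hv : Function.Injective v) : translationMatrix v 0 = 1 := by
  ext j k
  rcases eq_or_ne j k with rfl | hjk
  · simp [translationMatrix, eval_basis_self hv.injOn]
  · simp [translationMatrix, eval_basis_of_ne hjk.symm, hjk]

theorem translationMatrix_mul (hv : Function.Injective v) (s t : K) :
    translationMatrix v s * translationMatrix v t = translationMatrix v (s + t) := by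
  ext j k
  have hdeg : (taylor t (Lagrange.basis univ v k)).degree < Fintype.card ι := by
    rw [degree_taylor, degree_basis hv.injOn (mem_univ k), card_univ, Nat.cast_lt]
    exact Nat.sub_lt (Fintype.card_pos_iff.2 ⟨k⟩) one_pos
  have h := congrFun (translationMatrix_mulVec_eval hv hdeg s) j
  simp only [taylor_eval, add_assoc] at h
  exact h

theorem one_sub_translationMatrix_mulVec_one (hv : Function.Injective v) (t : K) :
    (1 - translationMatrix v t) *ᵥ 1 = 0 := by
  cases isEmpty_or_nonempty ι
  · exact Subsingleton.elim _ _
  have h := translationMatrix_mulVec_eval hv (p := 1)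
    (by simpa using Fintype.card_pos (α := ι)) t
  simp only [eval_one] at h
  rw [sub_mulVec, one_mulVec]
  exact sub_eq_zero.2 h.symm

theorem sum_nodalWeight_mul_eval (hv : Function.Injective v) {p : K[X]}
    (hp : p.degree < Fintype.card ι) :
    ∑ j, nodalWeight univ v j * p.eval (v j) = p.coeff (Fintype.card ι - 1) := by
  rw [← card_univ, coeff_eq_sum hv.injOn (by simpa using hp)]
  simp [nodalWeight, div_eq_inv_mul]

theorem sum_nodalWeight_mul_inv_sub (hv : Function.Injective v) [Nonempty ι] {x : K}
    (hx : ∀ j, x ≠ v j) :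
    ∑ j, nodalWeight univ v j * (x - v j)⁻¹ = ((nodal univ v).eval x)⁻¹ := by
  refine eq_inv_of_mul_eq_one_right ?_
  have h := eval_interpolate_not_at_node (s := univ) 1 fun j _ => hx j
  rw [interpolate_one hv.injOn univ_nonempty, eval_one] at h
  simpa using h.symm

theorem sum_nodalWeight_mul_eval_nodal_add (hv : Function.Injective v) (t : K) :
    ∑ j, nodalWeight univ v j * (nodal univ v).eval (v j + t) = Fintype.card ι * t := by
  cases isEmpty_or_nonempty ι
  · simp
  let q : K[X] := nodal univ (fun j => v j - t) - nodal univ v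
  have hdeg : q.degree < Fintype.card ι := by
    simpa [degree_nodal] using degree_sub_lt_left
      (p := nodal univ fun j => v j - t) (q := nodal univ v) (by simp [degree_nodal])
      nodal_ne_zero (by simp [nodal_monic.leadingCoeff])
  have heval (j : ι) : q.eval (v j) = (nodal univ v).eval (v j + t) := by
    simp [q, eval_nodal_at_node, eval_nodal, sub_sub_eq_add_sub]
  have hcoeff : q.coeff (Fintype.card ι - 1) = Fintype.card ι * t := by
    simp only [q, coeff_sub, nodal_eq, ← card_univ,
      prod_X_sub_C_coeff_card_pred univ _ univ_nonempty.card_pos]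
    simp
  simp only [← heval, sum_nodalWeight_mul_eval hv hdeg, hcoeff]

variable {t : K}

theorem translationWeight_mul_translationMatrix (ht : ∀ j k, v j + t ≠ v k) (j k : ι) :
    translationWeight v t j * translationMatrix v t j k =
      nodalWeight univ v j * nodalWeight univ v k * (v j + t - v k)⁻¹ := by
  rw [translationWeight, translationMatrix, of_apply,
    eval_basis_not_at_node (mem_univ k) (ht j k)]
  have := eval_nodal_not_at_node (s := univ) fun k _ => ht j k
  field_simp

theorem transpose_translationMatrix_mul_diagonal (ht : ∀ j k, v j + t ≠ v k) :
    (translationMatrix v t)ᵀ * diagonal (translationWeight v t) =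
      -(diagonal (translationWeight v (-t)) * translationMatrix v (-t)) := by
  have ht' (j k : ι) : v j + -t ≠ v k := fun h => ht k j (by rw [← h]; ring)
  ext j k
  rw [mul_diagonal, transpose_apply, neg_apply, diagonal_mul, mul_comm,
    translationWeight_mul_translationMatrix ht, translationWeight_mul_translationMatrix ht',
    ← mul_neg, ← inv_neg, mul_comm (nodalWeight _ _ _)]
  congr 2
  ring

theorem differenceGram_eq (hv : Function.Injective v) (ht : ∀ j k, v j + t ≠ v k) :
    differenceGram v t =
      diagonal (translationWeight v t) * (1 - translationMatrix v t) -
        diagonal (translationWeight v (-t)) * (1 - translationMatrix v (-t)) := by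
  have hinv : translationMatrix v (-t) * translationMatrix v t = 1 := by
    rw [translationMatrix_mul hv, neg_add_cancel, translationMatrix_zero hv]
  rw [differenceGram, transpose_sub, transpose_one, Matrix.sub_mul, one_mul,
    transpose_translationMatrix_mul_diagonal ht, sub_neg_eq_add, Matrix.add_mul,
    Matrix.mul_assoc, Matrix.mul_sub (translationMatrix v (-t)), hinv]
  noncomm_ring

theorem differenceGram_apply (hv : Function.Injective v) (ht : ∀ j k, v j + t ≠ v k) (j k : ι) :
    differenceGram v t j k =
      (if j = k then translationWeight v t j - translationWeight v (-t) j else 0) +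
        nodalWeight univ v j * nodalWeight univ v k *
          ((v j - t - v k)⁻¹ - (v j + t - v k)⁻¹) := by
  have ht' (j k : ι) : v j + -t ≠ v k := fun h => ht k j (by rw [← h]; ring)
  rw [differenceGram_eq hv ht, Matrix.sub_apply, diagonal_mul, diagonal_mul, Matrix.sub_apply,
    Matrix.sub_apply, mul_sub, mul_sub, translationWeight_mul_translationMatrix ht,
    translationWeight_mul_translationMatrix ht', one_apply, ← sub_eq_add_neg]
  split_ifs <;> ring

theorem det_differenceGram (hv : Function.Injective v) [Nonempty ι] (t : K) :
    (differenceGram v t).det = 0 := by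
  have h : (1 - translationMatrix v t).det = 0 := by
    by_contra hne
    exact one_ne_zero (eq_zero_of_mulVec_eq_zero hne (one_sub_translationMatrix_mulVec_one hv t))
  rw [differenceGram, det_mul, h, mul_zero]

theorem nodalWeight_dotProduct_adjugate_diagonal_mulVec (hv : Function.Injective v)
    (ht : ∀ j k, v j + t ≠ v k) :
    nodalWeight univ v ⬝ᵥ (diagonal (translationWeight v t)).adjugate *ᵥ nodalWeight univ v =
      Fintype.card ι * t * ∏ j, translationWeight v t j := by
  have hterm (j : ι) : nodalWeight univ v j *
        ((∏ k ∈ univ.erase j, translationWeight v t k) * nodalWeight univ v j) =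
      nodalWeight univ v j * (nodal univ v).eval (v j + t) * ∏ k, translationWeight v t k := by
    have := eval_nodal_not_at_node (s := univ) fun k _ => ht j k
    rw [← mul_prod_erase univ _ (mem_univ j), translationWeight]
    field_simp
  simp only [dotProduct, adjugate_diagonal, mulVec_diagonal, hterm]
  rw [← sum_mul, sum_nodalWeight_mul_eval_nodal_add hv]

end Nodes

variable {n : ℕ} {v : Fin (n + 1) → K}

theorem one_sub_translationMatrix_mul_vandermonde (hv : Function.Injective v) (t : K) :
    (1 - translationMatrix v t) * vandermonde v =
      vandermonde v * monomialDifferenceMatrix n t := by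
  have hdeg (m : Fin (n + 1)) :
      (X ^ (m : ℕ) - (X + C t) ^ (m : ℕ) : K[X]).natDegree ≤ m :=
    (natDegree_sub_le _ _).trans (by simp)
  rw [monomialDifferenceMatrix,
    ← eval_matrixOfPolynomials_eq_vandermonde_mul_matrixOfPolynomials v _ hdeg]
  ext j m
  have h := congrFun (translationMatrix_mulVec_eval hv (p := X ^ (m : ℕ))
    (by rw [degree_X_pow, Fintype.card_fin]; exact_mod_cast m.2) t) j
  simp only [eval_pow, eval_X] at h
  rw [Matrix.sub_mul, one_mul, Matrix.sub_apply]
  simpa [vandermonde_apply, mul_apply, mulVec, dotProduct] using h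

theorem nodalWeight_vecMul_vandermonde (hv : Function.Injective v) :
    nodalWeight univ v ᵥ* vandermonde v = Pi.single (Fin.last n) 1 := by
  ext m
  have h := sum_nodalWeight_mul_eval hv (p := X ^ (m : ℕ))
    (by rw [degree_X_pow, Fintype.card_fin]; exact_mod_cast m.2)
  simp only [eval_pow, eval_X, coeff_X_pow, Fintype.card_fin, Nat.add_sub_cancel] at h
  simpa [vecMul, dotProduct, vandermonde_apply, Pi.single_apply, Fin.ext_iff, eq_comm] using h

theorem adjugate_one_sub_translationMatrix (hv : Function.Injective v) (t : K) :
    (1 - translationMatrix v t).adjugate =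
      ((n.factorial : K) * t ^ n) • vecMulVec 1 (nodalWeight univ v) := by
  set W := vandermonde v
  have hW : W.det ≠ 0 := det_vandermonde_ne_zero_iff.2 hv
  have hcol : W *ᵥ Pi.single 0 1 = 1 := by ext; simp [W, vandermonde_apply]
  have hrow : Pi.single (Fin.last n) 1 ᵥ* W.adjugate = W.det • nodalWeight univ v := by
    rw [← nodalWeight_vecMul_vandermonde hv, vecMul_vecMul, mul_adjugate, vecMul_smul,
      vecMul_one]
  have hadj := congrArg (fun A => W * adjugate A) (one_sub_translationMatrix_mul_vandermonde hv t)
  simp only [adjugate_mul_distrib, ← Matrix.mul_assoc] at hadj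
  refine smul_right_injective _ hW ?_
  calc W.det • (1 - translationMatrix v t).adjugate
    _ = W * W.adjugate * (1 - translationMatrix v t).adjugate := by
      rw [mul_adjugate, Matrix.smul_mul, one_mul]
    _ = W * (monomialDifferenceMatrix n t).adjugate * W.adjugate := hadj
    _ = ((n.factorial : K) * t ^ n) •
        (W * vecMulVec (Pi.single 0 1) (Pi.single (Fin.last n) 1) * W.adjugate) := by
      rw [adjugate_monomialDifferenceMatrix, ← single_eq_single_vecMulVec_single,
        ← Matrix.smul_mul, ← Matrix.mul_smul, smul_single, smul_eq_mul, mul_one]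
    _ = _ := by
      rw [mul_vecMulVec, vecMulVec_mul, hcol, hrow, vecMulVec_smul, smul_comm]

theorem adjugate_differenceGram (hv : Function.Injective v) {t : K}
    (ht : ∀ j k, v j + t ≠ v k) :
    (differenceGram v t).adjugate =
      ((n.factorial : K) * (n + 1).factorial * t ^ (2 * n + 1) * ∏ j, translationWeight v t j) •
        vecMulVec 1 1 := by
  rw [differenceGram, adjugate_mul_distrib, adjugate_mul_distrib, ← adjugate_transpose,
    adjugate_one_sub_translationMatrix hv, transpose_smul, transpose_vecMulVec,
    Matrix.smul_mul, Matrix.mul_smul, Matrix.mul_smul, ← Matrix.mul_assoc, vecMulVec_mul,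
    vecMulVec_mul_vecMulVec, ← dotProduct_mulVec,
    nodalWeight_dotProduct_adjugate_diagonal_mulVec hv ht, vecMulVec_smul, smul_smul, smul_smul]
  congr 1
  rw [Fintype.card_fin, Nat.factorial_succ]
  push_cast
  ring

theorem det_differenceGram_add_vecMulVec (hv : Function.Injective v) {t : K}
    (ht : ∀ j k, v j + t ≠ v k) (a b : Fin (n + 1) → K) :
    (differenceGram v t + vecMulVec a b).det =
      (n.factorial : K) * (n + 1).factorial * t ^ (2 * n + 1) *
        (∏ j, translationWeight v t j) * (∑ j, a j) * ∑ j, b j := by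
  rw [det_add_vecMulVec, det_differenceGram hv, adjugate_differenceGram hv ht, smul_mulVec,
    vecMulVec_mulVec]
  simp only [one_dotProduct, op_sum, dotProduct_smul, dotProduct_one,
    MulOpposite.smul_eq_mul_unop, unop_sum, MulOpposite.unop_op, smul_eq_mul, zero_add]
  ring

end Translation

namespace LL

open Lagrange

theorem sub_sq_add_sq_eq_mul (c x y : ℂ) :
    (x - y) ^ 2 + c ^ 2 = (x - I * c - y) * (x + I * c - y) := by
  linear_combination c ^ 2 * I_sq

theorem sub_sq_add_sq_ne_zero_iff {c x y : ℂ} :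
    (x - y) ^ 2 + c ^ 2 ≠ 0 ↔ x - I * c ≠ y ∧ x + I * c ≠ y := by
  rw [sub_sq_add_sq_eq_mul, mul_ne_zero_iff, sub_ne_zero, sub_ne_zero]

theorem I_mul_Kk {c x y : ℂ} (h : (x - y) ^ 2 + c ^ 2 ≠ 0) :
    I * Kk c x y = (x - I * c - y)⁻¹ - (x + I * c - y)⁻¹ := by
  have hm := sub_ne_zero.2 (sub_sq_add_sq_ne_zero_iff.1 h).1
  have hp := sub_ne_zero.2 (sub_sq_add_sq_ne_zero_iff.1 h).2
  rw [Kk, sub_sq_add_sq_eq_mul]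
  field_simp
  ring

theorem prod_sub_eq_neg_one_pow_card_mul {R ι : Type*} [CommRing R] (s : Finset ι) (v : ι → R)
    (x : R) : ∏ i ∈ s, (v i - x) = (-1) ^ #s * ∏ i ∈ s, (x - v i) := by
  simp [← prod_neg]

theorem neg_one_pow_pow_self {R : Type*} [Ring R] (n : ℕ) : ((-1 : R) ^ n) ^ n = (-1) ^ n := by
  rcases n.even_or_odd with h | h <;> simp [h.neg_one_pow]

section VacuumParameters

variable {μ : Fin 0 → ℂ} {M n : ℕ}

theorem Vp_eq_neg_one_pow_mul_inv_eval_nodal (c : ℂ) (lam : Fin M → ℂ) (x : ℂ) :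
    Vp c μ lam x = (-1) ^ M * ((nodal univ lam).eval (x - I * c))⁻¹ := by
  simp only [Vp, sub_add, prod_sub_eq_neg_one_pow_card_mul univ lam]
  simp [eval_nodal, mul_comm, ← inv_pow]

theorem Vm_eq_neg_one_pow_mul_inv_eval_nodal (c : ℂ) (lam : Fin M → ℂ) (x : ℂ) :
    Vm c μ lam x = (-1) ^ M * ((nodal univ lam).eval (x + I * c))⁻¹ := by
  simp only [Vm, sub_sub, prod_sub_eq_neg_one_pow_card_mul univ lam]
  simp [eval_nodal, mul_comm, ← inv_pow]

theorem Xi_eq_neg_one_pow_mul_nodalWeight (lam : Fin (n + 1) → ℂ) (j : Fin (n + 1)) :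
    Xi μ lam j = (-1) ^ n * nodalWeight univ lam j := by
  simp [Xi, nodalWeight, prod_sub_eq_neg_one_pow_card_mul _ lam, mul_comm, ← inv_pow]

theorem prod_prod_sub_add_eq_prod_eval_nodal (c : ℂ) (lam : Fin M → ℂ) :
    ∏ j, ∏ k, (lam j - lam k + I * c) =
      (-1) ^ M * ∏ k, (nodal univ lam).eval (lam k - I * c) := by
  rw [prod_comm]
  simp only [sub_add, prod_sub_eq_neg_one_pow_card_mul univ lam, prod_mul_distrib, prod_const,
    card_univ, Fintype.card_fin, eval_nodal,
    neg_one_pow_pow_self]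

theorem I_mul_sum_nodalWeight_mul_Kk {c x : ℂ} {lam : Fin (n + 1) → ℂ}
    (hinj : Function.Injective lam) (hx : ∀ j, (x - lam j) ^ 2 + c ^ 2 ≠ 0) :
    I * ∑ j, nodalWeight univ lam j * Kk c x (lam j) =
      (-1) ^ (n + 1) * (Vp c μ lam x - Vm c μ lam x) := by
  simp only [mul_sum, mul_left_comm I, I_mul_Kk (hx _), mul_sub, sum_sub_distrib]
  rw [sum_nodalWeight_mul_inv_sub hinj fun j => (sub_sq_add_sq_ne_zero_iff.1 (hx j)).1,
    sum_nodalWeight_mul_inv_sub hinj fun j => (sub_sq_add_sq_ne_zero_iff.1 (hx j)).2,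
    Vp_eq_neg_one_pow_mul_inv_eval_nodal, Vm_eq_neg_one_pow_mul_inv_eval_nodal]
  simp only [← mul_assoc, ← mul_pow]
  simp

variable {c lp ls : ℂ} {lam : Fin (n + 1) → ℂ}

theorem diagonal_mul_one_add_Umat_mul_diagonal (hinj : Function.Injective lam)
    (hlam : ∀ j k, (lam j - lam k) ^ 2 + c ^ 2 ≠ 0)
    (hV : ∀ j, Vp c μ lam (lam j) ≠ Vm c μ lam (lam j)) :
    diagonal (fun j => Vp c μ lam (lam j) - Vm c μ lam (lam j)) * (1 + Umat c μ lam lp ls) *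
        diagonal (nodalWeight univ lam) =
      (-1 : ℂ) ^ (n + 1) • (differenceGram lam (-(I * c)) +
        vecMulVec (fun j => I * (nodalWeight univ lam j * Kk c ls (lam j)))
          (fun k => nodalWeight univ lam k * Kk c lp (lam k))) := by
  have ht (j k) : lam j - I * c ≠ lam k := (sub_sq_add_sq_ne_zero_iff.1 (hlam j k)).1
  ext j k
  have hD := sub_ne_zero.2 (hV j)
  have hU : (Vp c μ lam (lam j) - Vm c μ lam (lam j)) * Umat c μ lam lp ls j k =
      (-1) ^ n * nodalWeight univ lam j *
        (I * Kk c (lam j) (lam k) - I * (Kk c lp (lam k) * Kk c ls (lam j))) := by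
    rw [Umat, Xi_eq_neg_one_pow_mul_nodalWeight]
    field_simp
  rw [mul_diagonal, diagonal_mul, Matrix.add_apply, mul_add, hU, I_mul_Kk (hlam j k),
    Matrix.smul_apply, Matrix.add_apply, differenceGram_apply hinj (t := -(I * c)) ht,
    vecMulVec_apply, one_apply, Vp_eq_neg_one_pow_mul_inv_eval_nodal,
    Vm_eq_neg_one_pow_mul_inv_eval_nodal,
    translationWeight, translationWeight, smul_eq_mul, sub_neg_eq_add, neg_neg,
    ← sub_eq_add_neg]
  split_ifs with h
  · subst h
    ring
  · ring

theorem prod_eval_nodal_mul_prod_mul_det_one_add_Umat (hinj : Function.Injective lam)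
    (hlam : ∀ j k, (lam j - lam k) ^ 2 + c ^ 2 ≠ 0)
    (hp : ∀ j, (lp - lam j) ^ 2 + c ^ 2 ≠ 0) (hs : ∀ j, (ls - lam j) ^ 2 + c ^ 2 ≠ 0)
    (hV : ∀ j, Vp c μ lam (lam j) ≠ Vm c μ lam (lam j)) :
    (∏ k, (nodal univ lam).eval (lam k - I * c)) *
        (∏ j, (Vp c μ lam (lam j) - Vm c μ lam (lam j))) * (1 + Umat c μ lam lp ls).det =
      n.factorial * (n + 1).factorial * c ^ (2 * n + 1) *
        ((Vp c μ lam lp - Vm c μ lam lp) * (Vp c μ lam ls - Vm c μ lam ls)) := by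
  have ht (j k) : lam j - I * c ≠ lam k := (sub_sq_add_sq_ne_zero_iff.1 (hlam j k)).1
  have hω : ∏ j, nodalWeight univ lam j ≠ 0 :=
    prod_ne_zero_iff.2 fun j _ => nodalWeight_ne_zero hinj.injOn (mem_univ j)
  have hP : ∏ j, (nodal univ lam).eval (lam j - I * c) ≠ 0 :=
    prod_ne_zero_iff.2 fun j _ => eval_nodal_not_at_node fun k _ => ht j k
  have hsign : ((-1 : ℂ) ^ (n + 1)) ^ 2 = 1 := by rw [← pow_mul', pow_mul, neg_one_sq, one_pow]
  have hpow : (-(I * c)) ^ (2 * n + 1) = (-1) ^ (n + 1) * c ^ (2 * n + 1) * I := by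
    rw [pow_succ, pow_mul, neg_sq, mul_pow, I_sq, mul_pow]
    ring
  have hsum := I_mul_sum_nodalWeight_mul_Kk (μ := μ) hinj hp
  have hdet := congrArg det
    (diagonal_mul_one_add_Umat_mul_diagonal (lp := lp) (ls := ls) hinj hlam hV)
  simp only [det_mul, det_diagonal, det_smul,
    det_differenceGram_add_vecMulVec hinj (t := -(I * c)) ht, ← mul_sum, Fintype.card_fin,
    I_mul_sum_nodalWeight_mul_Kk (μ := μ) hinj hs, neg_one_pow_pow_self, translationWeight,
    prod_div_distrib, ← sub_eq_add_neg] at hdet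
  field_simp at hdet
  rw [hsign, hpow] at hdet
  linear_combination hdet + n.factorial * (n + 1).factorial * (-1) ^ (n + 1) * c ^ (2 * n + 1) *
    (Vp c μ lam ls - Vm c μ lam ls) * hsum + n.factorial * (n + 1).factorial * c ^ (2 * n + 1) *
    ((Vp c μ lam lp - Vm c μ lam lp) * (Vp c μ lam ls - Vm c μ lam ls)) * hsign

end VacuumParameters

end LL

/-- Base case of the inductive proof (`N = 0`): the determinant formula for the form
factor of `Ψ^R(0)` between the vacuum and an `R`-particle Bethe state equals `(−i√c)^R R!`. -/
theorem HR_vacuum_value {R : ℕ} (c sc : ℂ) (hc : c ≠ 0) (hsc : sc ^ 2 = c) (hR : 1 ≤ R)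
    (lam : Fin R → ℂ) (hinj : Function.Injective lam)
    (hpm : ∀ m j : Fin R, m ≠ j →
      lam m - lam j + I * c ≠ 0 ∧ lam m - lam j - I * c ≠ 0)
    (lp ls : ℂ)
    (hp1 : ∀ j, (lp - lam j) ^ 2 + c ^ 2 ≠ 0)
    (hs1 : ∀ j, (ls - lam j) ^ 2 + c ^ 2 ≠ 0)
    (hV : ∀ j, Vp c (Fin.elim0 : Fin 0 → ℂ) lam (lam j) ≠
      Vm c (Fin.elim0 : Fin 0 → ℂ) lam (lam j))
    (hVp : Vp c (Fin.elim0 : Fin 0 → ℂ) lam lp ≠ Vm c (Fin.elim0 : Fin 0 → ℂ) lam lp)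
    (hVs : Vp c (Fin.elim0 : Fin 0 → ℂ) lam ls ≠ Vm c (Fin.elim0 : Fin 0 → ℂ) lam ls) :
    (I * sc) ^ R / (c ^ (2 * R - 1) * ((R - 1).factorial : ℂ)) *
        (∏ j, ∏ k, (lam j - lam k + I * c)) *
        (∏ j, (Vp c (Fin.elim0 : Fin 0 → ℂ) lam (lam j) -
          Vm c (Fin.elim0 : Fin 0 → ℂ) lam (lam j))) *
        (1 + Umat c (Fin.elim0 : Fin 0 → ℂ) lam lp ls).det /
        ((Vp c (Fin.elim0 : Fin 0 → ℂ) lam lp - Vm c (Fin.elim0 : Fin 0 → ℂ) lam lp) *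
          (Vp c (Fin.elim0 : Fin 0 → ℂ) lam ls - Vm c (Fin.elim0 : Fin 0 → ℂ) lam ls)) =
      (-(I * sc)) ^ R * (R.factorial : ℂ) := by
  obtain ⟨n, rfl⟩ := Nat.exists_eq_add_of_le' hR
  have hlam (j k) : (lam j - lam k) ^ 2 + c ^ 2 ≠ 0 := by
    rcases eq_or_ne j k with rfl | hjk
    · simpa using hc
    · rw [sub_sq_add_sq_eq_mul, sub_right_comm, add_sub_right_comm]
      exact mul_ne_zero (hpm j k hjk).2 (hpm j k hjk).1
  have hp := sub_ne_zero.2 hVp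
  have hs := sub_ne_zero.2 hVs
  have hdet := prod_eval_nodal_mul_prod_mul_det_one_add_Umat hinj hlam hp1 hs1 hV
  have hn := Nat.cast_ne_zero (R := ℂ).2 n.factorial_ne_zero
  rw [prod_prod_sub_add_eq_prod_eval_nodal, show 2 * (n + 1) - 1 = 2 * n + 1 by lia,
    Nat.add_sub_cancel, neg_pow (I * sc)]
  field_simp
  linear_combination (I * sc) ^ (n + 1) * hdet
end

section
/- Fix c ∈ ℂ with c ≠ 0, an integer R ≥ 1 and N ≥ 1, and set M = N+R. Under the nondegeneracy hypotheses making H_R well defined (for both the full sets and the reduced sets), the function μ_N ↦ (μ_N−λ_M)·H_R(μ_1,…,μ_N; λ_1,…,λ_M; λ_p,λ_s) extends continuously to μ_N = λ_M, and its value there equals ic·[∏_{j=1}^{N−1} f(μ_j,λ_M)·∏_{j=1}^{M−1} f(λ_M,λ_j) − ∏_{j=1}^{M−1} f(λ_j,λ_M)·∏_{j=1}^{N−1} f(λ_M,μ_j)]·H_R(μ_1,…,μ_{N−1}; λ_1,…,λ_{M−1}; λ_p,λ_s), where f(λ,μ) = (λ−μ+ic)/(λ−μ). -/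
open Complex Finset Matrix

open LL

/-!
Multiplying row `j` of `1 + Ũ` by `Ṽ⁺_j − Ṽ⁻_j` removes the only denominators that depend on
`μ_1, …, μ_N`, so the resulting determinant is polynomial in `μ_N`. At `μ_N = λ_M` the factors
`μ_N − λ_j ± ic` and `λ_M − λ_j ± ic` cancel in every `Ṽ^±_j`, while `∏ (μ_m − λ_M)` vanishes: the
last row becomes `(0, …, 0, Ṽ⁺_M − Ṽ⁻_M)`, so the determinant is `Ṽ⁺_M − Ṽ⁻_M` times the reduced
one. Since `f(λ, μ)` and `f(μ, λ)` are, up to the common factor `λ − μ`, the numbers `λ − μ ± ic`,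
this `Ṽ⁺_M − Ṽ⁻_M` is the bracket of the residue formula up to products that cancel against the
remaining factors of `H_R`.
-/

section FinProducts

variable {m n : ℕ}

theorem prod_univ_erase_castSucc {A : Type*} [CommMonoid A] (f : Fin (m + 1) → A) (j : Fin m) :
    ∏ k ∈ univ.erase j.castSucc, f k = (∏ k ∈ univ.erase j, f k.castSucc) * f (Fin.last m) := by
  rw [Fin.univ_castSuccEmb, erase_cons_of_ne _ (Fin.castSucc_lt_last j).ne', prod_cons,
    ← Fin.castSuccEmb_apply, ← map_erase, prod_map, mul_comm]
  simp only [Fin.castSuccEmb_apply]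

theorem prod_sub_comm {ι A : Type*} [Fintype ι] [CommRing A] (a : ι → A) (x : A) :
    ∏ i, (x - a i) = (-1) ^ Fintype.card ι * ∏ i, (a i - x) := by
  simp only [← neg_sub _ x, prod_neg, card_univ]

theorem prod_prod_sub_add_snoc {A : Type*} [CommRing A] (a : Fin m → A) (x d : A) :
    ∏ j, ∏ k, (Fin.snoc (α := fun _ ↦ A) a x j - Fin.snoc (α := fun _ ↦ A) a x k + d) =
      d * (∏ j, (a j - x + d)) * (∏ j, (x - a j + d)) * ∏ j, ∏ k, (a j - a k + d) := by
  simp only [Fin.prod_univ_castSucc, Fin.snoc_castSucc, Fin.snoc_last, prod_mul_distrib, sub_self,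
    zero_add]
  ring

theorem mul_prod_prod_inv_sub_snoc {K : Type*} [Field K] (a : Fin m → K) (b : Fin n → K) {x y : K}
    (hxy : y ≠ x) :
    (y - x) * ∏ j, ∏ k,
        (Fin.snoc (α := fun _ ↦ K) a x j - Fin.snoc (α := fun _ ↦ K) b y k)⁻¹ =
      -((∏ j, ∏ k, (a j - b k)⁻¹) * (∏ j, (a j - y)⁻¹) * ∏ k, (x - b k)⁻¹) := by
  have hcancel : (y - x) * (x - y)⁻¹ = -1 := by
    rw [← neg_sub x y, neg_mul, mul_inv_cancel₀ (sub_ne_zero.2 hxy.symm)]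
  simp only [Fin.prod_univ_castSucc, Fin.snoc_castSucc, Fin.snoc_last, prod_mul_distrib]
  linear_combination (∏ j, ∏ k, (a j - b k)⁻¹) * (∏ j, (a j - y)⁻¹) * (∏ k, (x - b k)⁻¹) * hcancel

theorem tendsto_mul_prod_prod_inv_sub_snoc {K : Type*} [Field K] [TopologicalSpace K]
    [IsTopologicalDivisionRing K] (a : Fin m → K) (b : Fin n → K) {x : K} (ha : ∀ j, a j ≠ x) :
    Filter.Tendsto
      (fun y ↦ (y - x) * ∏ j, ∏ k,
        (Fin.snoc (α := fun _ ↦ K) a x j - Fin.snoc (α := fun _ ↦ K) b y k)⁻¹)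
      (nhdsWithin x {x}ᶜ)
      (nhds (-((∏ j, ∏ k, (a j - b k)⁻¹) * (∏ j, (a j - x)⁻¹) * ∏ k, (x - b k)⁻¹))) := by
  have hcont : ContinuousAt
      (fun y ↦ -((∏ j, ∏ k, (a j - b k)⁻¹) * (∏ j, (a j - y)⁻¹) * ∏ k, (x - b k)⁻¹)) x := by
    refine ((continuousAt_const.mul ?_).mul continuousAt_const).neg
    exact tendsto_finsetProd _ fun j _ ↦
      (continuousAt_const.sub continuousAt_id).inv₀ (sub_ne_zero.2 (ha j))
  refine (hcont.tendsto.mono_left nhdsWithin_le_nhds).congr' ?_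
  filter_upwards [self_mem_nhdsWithin] with y hy
  exact (mul_prod_prod_inv_sub_snoc a b hy).symm

theorem det_eq_mul_det_submatrix_castSucc {A : Type*} [CommRing A]
    (B : Matrix (Fin (m + 1)) (Fin (m + 1)) A) (hB : ∀ k : Fin m, B (Fin.last m) k.castSucc = 0) :
    B.det = B (Fin.last m) (Fin.last m) * (B.submatrix Fin.castSucc Fin.castSucc).det := by
  rw [det_succ_row B (Fin.last m), Fin.sum_univ_castSucc]
  simp [hB, Fin.succAbove_last, ← two_mul]

end FinProducts

namespace LL

variable {N M : ℕ} {c : ℂ} {μ : Fin N → ℂ} {lam : Fin M → ℂ} {lp ls x y : ℂ}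

theorem sq_sub_add_sq_ne_zero_iff :
    (y - x) ^ 2 + c ^ 2 ≠ 0 ↔ x - y + I * c ≠ 0 ∧ x - y - I * c ≠ 0 := by
  have hfactor : (y - x) ^ 2 + c ^ 2 = (x - y + I * c) * (x - y - I * c) := by
    linear_combination c ^ 2 * I_sq
  rw [hfactor, mul_ne_zero_iff]

section ScatteringFactor

theorem fsc_ne_zero (hne : x ≠ y) (h : (y - x) ^ 2 + c ^ 2 ≠ 0) : fsc c x y ≠ 0 :=
  div_ne_zero (sq_sub_add_sq_ne_zero_iff.1 h).1 (sub_ne_zero.2 hne)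

theorem fsc_mul_sub (c : ℂ) (hne : x ≠ y) : fsc c x y * (x - y) = x - y + I * c :=
  div_mul_cancel₀ _ (sub_ne_zero.2 hne)

theorem fsc_mul_sub_swap (c : ℂ) (hne : x ≠ y) : fsc c x y * (y - x) = y - x - I * c := by
  linear_combination -fsc_mul_sub c hne

theorem Vp_eq_fsc (c : ℂ) (hμ : ∀ k, μ k ≠ x) (hlam : ∀ j, lam j ≠ x) :
    Vp c μ lam x = (∏ k, (μ k - x)) / (∏ j, (lam j - x)) *
      ((∏ k, fsc c (μ k) x) / ∏ j, fsc c (lam j) x) := by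
  simp only [Vp, ← fsc_mul_sub c (hμ _), ← fsc_mul_sub c (hlam _), prod_mul_distrib]
  ring

theorem Vm_eq_fsc (c : ℂ) (hμ : ∀ k, μ k ≠ x) (hlam : ∀ j, lam j ≠ x) :
    Vm c μ lam x = (∏ k, (μ k - x)) / (∏ j, (lam j - x)) *
      ((∏ k, fsc c x (μ k)) / ∏ j, fsc c x (lam j)) := by
  simp only [Vm, ← fsc_mul_sub_swap c (hμ _).symm, ← fsc_mul_sub_swap c (hlam _).symm,
    prod_mul_distrib]
  ring

end ScatteringFactor

section VDiff

/-- The difference `Ṽ⁺ − Ṽ⁻` at a point `x`, which need not be one of the `λ_j`; in the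
notation of the paper, `Ṽ⁺_j − Ṽ⁻_j` is `VDiff c μ lam (lam j)`. -/
noncomputable def VDiff (c : ℂ) (μ : Fin N → ℂ) (lam : Fin M → ℂ) (x : ℂ) : ℂ :=
  Vp c μ lam x - Vm c μ lam x

theorem VDiff_ne_zero : VDiff c μ lam x ≠ 0 ↔ Vp c μ lam x ≠ Vm c μ lam x :=
  sub_ne_zero

theorem continuous_VDiff (c : ℂ) (lam : Fin M → ℂ) (x : ℂ) :
    Continuous fun μ : Fin N → ℂ ↦ VDiff c μ lam x := by
  simp only [VDiff, Vp, Vm, div_eq_mul_inv]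
  fun_prop

theorem VDiff_snoc_snoc (h : (y - x) ^ 2 + c ^ 2 ≠ 0) (μ : Fin N → ℂ) (lam : Fin M → ℂ) :
    VDiff c (Fin.snoc μ x) (Fin.snoc lam x) y = VDiff c μ lam y := by
  obtain ⟨hplus, hminus⟩ := sq_sub_add_sq_ne_zero_iff.1 h
  simp only [VDiff, Vp, Vm, Fin.prod_univ_castSucc, Fin.snoc_castSucc, Fin.snoc_last]
  rw [mul_div_mul_right _ _ hplus, mul_div_mul_right _ _ hminus]

/-- The coefficient `ic·[∏ f(μ_k,x)·∏ f(x,λ_j) − ∏ f(λ_j,x)·∏ f(x,μ_k)]` of the reduced form factor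
in the residue at a common point `x` adjoined to the families `μ` and `λ`. -/
noncomputable def residueFactor (c : ℂ) (μ : Fin N → ℂ) (lam : Fin M → ℂ) (x : ℂ) : ℂ :=
  I * c * ((∏ k, fsc c (μ k) x) * (∏ j, fsc c x (lam j)) -
    (∏ j, fsc c (lam j) x) * ∏ k, fsc c x (μ k))

theorem VDiff_mul_prod_eq_residueFactor (hμ : ∀ k, μ k ≠ x) (hlam : ∀ j, lam j ≠ x)
    (h : ∀ j, (lam j - x) ^ 2 + c ^ 2 ≠ 0) :
    I * c * (∏ j, (lam j - x + I * c)) * (∏ j, (x - lam j + I * c)) * VDiff c μ lam x *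
        ((∏ j, (lam j - x)⁻¹) * ∏ k, (x - μ k)⁻¹) =
      (-1) ^ (M + N) * residueFactor c μ lam x := by
  have hμ_sub : ∏ k, (μ k - x) ≠ 0 := prod_ne_zero_iff.2 fun k _ ↦ sub_ne_zero.2 (hμ k)
  have hlam_sub : ∏ j, (lam j - x) ≠ 0 := prod_ne_zero_iff.2 fun j _ ↦ sub_ne_zero.2 (hlam j)
  have hf : ∏ j, fsc c (lam j) x ≠ 0 :=
    prod_ne_zero_iff.2 fun j _ ↦ fsc_ne_zero (hlam j) (by rw [sub_sq_comm]; exact h j)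
  have hf' : ∏ j, fsc c x (lam j) ≠ 0 :=
    prod_ne_zero_iff.2 fun j _ ↦ fsc_ne_zero (hlam j).symm (h j)
  have hsign : ((-1 : ℂ) ^ N)⁻¹ = (-1) ^ N := by rw [← inv_pow, inv_neg_one]
  rw [VDiff, Vp_eq_fsc c hμ hlam, Vm_eq_fsc c hμ hlam, residueFactor]
  simp only [← fsc_mul_sub c (hlam _), ← fsc_mul_sub c (hlam _).symm, prod_mul_distrib,
    prod_inv_distrib, prod_sub_comm _ x, Fintype.card_fin, mul_inv, hsign, pow_add]
  field_simp

end VDiff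

section ClearedMatrix

theorem Xi_snoc_snoc_castSucc (hlam : ∀ j, lam j ≠ x) (μ : Fin N → ℂ) (j : Fin M) :
    Xi (Fin.snoc μ x : Fin (N + 1) → ℂ) (Fin.snoc lam x : Fin (M + 1) → ℂ) j.castSucc =
      Xi μ lam j := by
  simp only [Xi, prod_univ_erase_castSucc, Fin.prod_univ_castSucc, Fin.snoc_castSucc,
    Fin.snoc_last]
  rw [mul_div_mul_right _ _ (sub_ne_zero.2 (hlam j).symm)]

theorem Xi_snoc_snoc_last (μ : Fin N → ℂ) (lam : Fin M → ℂ) (x : ℂ) :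
    Xi (Fin.snoc μ x : Fin (N + 1) → ℂ) (Fin.snoc lam x : Fin (M + 1) → ℂ) (Fin.last M) = 0 := by
  simp only [Xi, Fin.prod_univ_castSucc, Fin.snoc_last, sub_self, mul_zero, zero_div]

theorem continuous_Xi (lam : Fin M → ℂ) (j : Fin M) :
    Continuous fun μ : Fin N → ℂ ↦ Xi μ lam j := by
  simp only [Xi, div_eq_mul_inv]
  fun_prop

/-- The matrix `1 + Ũ` with row `j` multiplied by `Ṽ⁺_j − Ṽ⁻_j`, written without the division by
`Ṽ⁺_j − Ṽ⁻_j`, so that it is continuous in `μ` also where this difference vanishes. -/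
noncomputable def clearedMat (c : ℂ) (μ : Fin N → ℂ) (lam : Fin M → ℂ) (lp ls : ℂ) :
    Matrix (Fin M) (Fin M) ℂ :=
  diagonal (fun j ↦ VDiff c μ lam (lam j)) + of fun j k ↦
    I * Xi μ lam j * (Kk c (lam j) (lam k) - Kk c lp (lam k) * Kk c ls (lam j))

theorem clearedMat_eq_diagonal_mul (hV : ∀ j, VDiff c μ lam (lam j) ≠ 0) (lp ls : ℂ) :
    clearedMat c μ lam lp ls =
      diagonal (fun j ↦ VDiff c μ lam (lam j)) * (1 + Umat c μ lam lp ls) := by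
  rw [mul_add, mul_one, clearedMat]
  congr 1
  ext j k
  have hj := hV j
  rw [diagonal_mul, of_apply, Umat, ← VDiff]
  field_simp

theorem clearedMat_snoc_snoc_submatrix (hlam : ∀ j, lam j ≠ x)
    (h : ∀ j, (lam j - x) ^ 2 + c ^ 2 ≠ 0) (μ : Fin N → ℂ) (lp ls : ℂ) :
    (clearedMat c (Fin.snoc μ x) (Fin.snoc lam x) lp ls).submatrix Fin.castSucc Fin.castSucc =
      clearedMat c μ lam lp ls := by
  ext j k
  simp only [clearedMat, submatrix_apply, Matrix.add_apply, of_apply, diagonal_apply,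
    Fin.castSucc_inj, Fin.snoc_castSucc, Xi_snoc_snoc_castSucc hlam, VDiff_snoc_snoc (h j)]

theorem det_clearedMat_snoc_snoc (hc : c ≠ 0) (hlam : ∀ j, lam j ≠ x)
    (h : ∀ j, (lam j - x) ^ 2 + c ^ 2 ≠ 0) (μ : Fin N → ℂ) (lp ls : ℂ) :
    (clearedMat c (Fin.snoc μ x) (Fin.snoc lam x) lp ls).det =
      VDiff c μ lam x * (clearedMat c μ lam lp ls).det := by
  have hself : (x - x) ^ 2 + c ^ 2 ≠ 0 := by simpa using hc
  rw [det_eq_mul_det_submatrix_castSucc, clearedMat_snoc_snoc_submatrix hlam h]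
  · simp only [clearedMat, Matrix.add_apply, of_apply, diagonal_apply_eq, Fin.snoc_last,
      VDiff_snoc_snoc hself, Xi_snoc_snoc_last, mul_zero, zero_mul, add_zero]
  · intro k
    simp only [clearedMat, Matrix.add_apply, of_apply,
      diagonal_apply_ne _ (Fin.castSucc_lt_last k).ne', Xi_snoc_snoc_last, mul_zero, zero_mul,
      add_zero]

theorem continuous_clearedMat (c : ℂ) (lam : Fin M → ℂ) (lp ls : ℂ) :
    Continuous fun μ : Fin N → ℂ ↦ clearedMat c μ lam lp ls := by
  have hV := fun j ↦ continuous_VDiff (N := N) c lam (lam j)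
  have hXi := continuous_Xi (N := N) lam
  refine (Continuous.matrix_diagonal (continuous_pi hV)).add (continuous_matrix fun j k ↦ ?_)
  exact ((hXi j).const_mul I).mul_const _

end ClearedMatrix

section FormFactor

/-- The factor of `H_R` in which the auxiliary points `λ_p`, `λ_s` and the functions `Ṽ^±` enter. -/
noncomputable def detRatio (c : ℂ) (μ : Fin N → ℂ) (lam : Fin M → ℂ) (lp ls : ℂ) : ℂ :=
  (clearedMat c μ lam lp ls).det / (VDiff c μ lam lp * VDiff c μ lam ls)

/-- The numerical prefactor of `H_R`, where `N` is the size of the family `μ`. -/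
noncomputable def normConst (c sc : ℂ) (R N : ℕ) : ℂ :=
  (I * sc) ^ R / (c ^ (2 * R - 1) * ((R - 1).factorial : ℂ)) * (-1 : ℂ) ^ (N * (R - 1))

theorem normConst_succ (c sc : ℂ) (R N : ℕ) :
    normConst c sc R (N + 1) = (-1) ^ (R - 1) * normConst c sc R N := by
  rw [normConst, normConst, add_one_mul, pow_add]
  ring

theorem HR_eq_mul_detRatio (hV : ∀ j, VDiff c μ lam (lam j) ≠ 0) (sc : ℂ) (R : ℕ) (lp ls : ℂ) :
    HR c sc R μ lam lp ls =
      normConst c sc R N * (∏ j, ∏ k, (lam j - lam k + I * c)) * (∏ j, ∏ k, (lam j - μ k)⁻¹) *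
        detRatio c μ lam lp ls := by
  rw [detRatio, clearedMat_eq_diagonal_mul hV, det_mul, det_diagonal]
  simp only [HR, normConst, VDiff]
  ring

theorem continuousAt_detRatio (hlp : VDiff c μ lam lp ≠ 0) (hls : VDiff c μ lam ls ≠ 0) :
    ContinuousAt (fun μ ↦ detRatio c μ lam lp ls) μ :=
  (continuous_clearedMat c lam lp ls).matrix_det.continuousAt.div
    ((continuous_VDiff c lam lp).mul (continuous_VDiff c lam ls)).continuousAt
    (mul_ne_zero hlp hls)

theorem detRatio_snoc_snoc (hc : c ≠ 0) (hlam : ∀ j, lam j ≠ x)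
    (h : ∀ j, (lam j - x) ^ 2 + c ^ 2 ≠ 0) (hlp : (lp - x) ^ 2 + c ^ 2 ≠ 0)
    (hls : (ls - x) ^ 2 + c ^ 2 ≠ 0) (μ : Fin N → ℂ) :
    detRatio c (Fin.snoc μ x) (Fin.snoc lam x) lp ls =
      VDiff c μ lam x * detRatio c μ lam lp ls := by
  rw [detRatio, detRatio, det_clearedMat_snoc_snoc hc hlam h, VDiff_snoc_snoc hlp,
    VDiff_snoc_snoc hls, mul_div_assoc]

theorem tendsto_detRatio_snoc_snoc (hc : c ≠ 0) (hlam : ∀ j, lam j ≠ x)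
    (h : ∀ j, (lam j - x) ^ 2 + c ^ 2 ≠ 0) (hlp : (lp - x) ^ 2 + c ^ 2 ≠ 0)
    (hls : (ls - x) ^ 2 + c ^ 2 ≠ 0) (hVlp : VDiff c μ lam lp ≠ 0) (hVls : VDiff c μ lam ls ≠ 0) :
    Filter.Tendsto (fun y ↦ detRatio c (Fin.snoc μ y) (Fin.snoc lam x) lp ls) (nhds x)
      (nhds (VDiff c μ lam x * detRatio c μ lam lp ls)) := by
  rw [← detRatio_snoc_snoc hc hlam h hlp hls]
  have hsnoc : Continuous fun y : ℂ ↦ (Fin.snoc μ y : Fin (N + 1) → ℂ) :=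
    continuous_const.finSnoc continuous_id
  refine ContinuousAt.comp (f := fun y : ℂ ↦ (Fin.snoc μ y : Fin (N + 1) → ℂ))
    (continuousAt_detRatio ?_ ?_) hsnoc.continuousAt
  · rwa [VDiff_snoc_snoc hlp]
  · rwa [VDiff_snoc_snoc hls]

theorem residueFactor_mul_HR {R : ℕ} (hR : 1 ≤ R) (hM : M = N + R) (hμ : ∀ k, μ k ≠ x)
    (hlam : ∀ j, lam j ≠ x) (h : ∀ j, (lam j - x) ^ 2 + c ^ 2 ≠ 0)
    (hV : ∀ j, VDiff c μ lam (lam j) ≠ 0) (sc lp ls : ℂ) :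
    residueFactor c μ lam x * HR c sc R μ lam lp ls =
      normConst c sc R (N + 1) *
        (I * c * (∏ j, (lam j - x + I * c)) * (∏ j, (x - lam j + I * c)) *
          ∏ j, ∏ k, (lam j - lam k + I * c)) *
        (-((∏ j, ∏ k, (lam j - μ k)⁻¹) * (∏ j, (lam j - x)⁻¹) * ∏ k, (x - μ k)⁻¹)) *
        (VDiff c μ lam x * detRatio c μ lam lp ls) := by
  have hsign : (-1 : ℂ) ^ (R - 1) * (-1) ^ (M + N) = -1 := by
    rw [← pow_add]
    exact Odd.neg_one_pow ⟨N + R - 1, by lia⟩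
  rw [HR_eq_mul_detRatio hV, normConst_succ]
  set rest := normConst c sc R N * (∏ j, ∏ k, (lam j - lam k + I * c)) *
    (∏ j, ∏ k, (lam j - μ k)⁻¹) * detRatio c μ lam lp ls
  linear_combination (-1) ^ (R - 1) * rest * VDiff_mul_prod_eq_residueFactor hμ hlam h +
    residueFactor c μ lam x * rest * hsign

theorem tendsto_mul_HR_snoc_snoc {R : ℕ} (hc : c ≠ 0) (hR : 1 ≤ R) (hM : M = N + R)
    (hμ : ∀ k, μ k ≠ x) (hlam : ∀ j, lam j ≠ x) (h : ∀ j, (lam j - x) ^ 2 + c ^ 2 ≠ 0)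
    (hlp : (lp - x) ^ 2 + c ^ 2 ≠ 0) (hls : (ls - x) ^ 2 + c ^ 2 ≠ 0)
    (hV : ∀ j, VDiff c μ lam (lam j) ≠ 0) (hVlp : VDiff c μ lam lp ≠ 0)
    (hVls : VDiff c μ lam ls ≠ 0) (sc : ℂ) :
    Filter.Tendsto (fun y ↦ (y - x) * HR c sc R (Fin.snoc μ y) (Fin.snoc lam x) lp ls)
      (nhdsWithin x {y | y ≠ x ∧ ∀ j : Fin (M + 1),
        VDiff c (Fin.snoc μ y) (Fin.snoc lam x) (Fin.snoc (α := fun _ ↦ ℂ) lam x j) ≠ 0})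
      (nhds (residueFactor c μ lam x * HR c sc R μ lam lp ls)) := by
  have hpole := tendsto_mul_prod_prod_inv_sub_snoc lam μ hlam
  have hdet := tendsto_detRatio_snoc_snoc hc hlam h hlp hls hVlp hVls
  rw [residueFactor_mul_HR hR hM hμ hlam h hV, ← prod_prod_sub_add_snoc]
  refine (((hpole.mono_left (nhdsWithin_mono x fun _ hy ↦ hy.1)).const_mul _).mul
    (hdet.mono_left nhdsWithin_le_nhds)).congr' ?_
  filter_upwards [self_mem_nhdsWithin] with y hy
  rw [HR_eq_mul_detRatio hy.2]
  ring

end FormFactor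

end LL

/-- Recursive residue relation (property 4) for the determinant formula `H_R`:
`μ_N ↦ (μ_N−λ_M)·H_R(μ₁,…,μ_N; λ₁,…,λ_M)` extends continuously to `μ_N = λ_M`, with value
`ic·[∏ f(μ_j,λ_M)·∏ f(λ_M,λ_j) − ∏ f(λ_j,λ_M)·∏ f(λ_M,μ_j)]·H_R(μ₁,…,μ_{N−1}; λ₁,…,λ_{M−1})`. -/
theorem HR_residue_relation {n m R : ℕ} (c sc : ℂ) (hc : c ≠ 0) (hsc : sc ^ 2 = c)
    (hR : 1 ≤ R) (hm : m + 1 = (n + 1) + R)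
    (μ0 : Fin n → ℂ) (lam : Fin (m + 1) → ℂ) (hinj : Function.Injective lam)
    (lp ls : ℂ)
    (hmulam : ∀ k j, μ0 k ≠ lam j)
    (hpm : ∀ j k, j ≠ k → lam j - lam k + I * c ≠ 0 ∧ lam j - lam k - I * c ≠ 0)
    (hp1 : ∀ j, (lp - lam j) ^ 2 + c ^ 2 ≠ 0)
    (hs1 : ∀ j, (ls - lam j) ^ 2 + c ^ 2 ≠ 0)
    (hVred : ∀ j : Fin m, Vp c μ0 (fun i : Fin m => lam i.castSucc) (lam j.castSucc) ≠
      Vm c μ0 (fun i : Fin m => lam i.castSucc) (lam j.castSucc))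
    (hVredp : Vp c μ0 (fun i : Fin m => lam i.castSucc) lp ≠
      Vm c μ0 (fun i : Fin m => lam i.castSucc) lp)
    (hVreds : Vp c μ0 (fun i : Fin m => lam i.castSucc) ls ≠
      Vm c μ0 (fun i : Fin m => lam i.castSucc) ls) :
    Filter.Tendsto
      (fun x : ℂ => (x - lam (Fin.last m)) * HR c sc R (Fin.snoc μ0 x) lam lp ls)
      (nhdsWithin (lam (Fin.last m))
        {x : ℂ |
          (∀ j, x ≠ lam j) ∧
          (∀ j, Vp c (Fin.snoc μ0 x) lam (lam j) ≠ Vm c (Fin.snoc μ0 x) lam (lam j)) ∧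
          Vp c (Fin.snoc μ0 x) lam lp ≠ Vm c (Fin.snoc μ0 x) lam lp ∧
          Vp c (Fin.snoc μ0 x) lam ls ≠ Vm c (Fin.snoc μ0 x) lam ls})
      (nhds (I * c *
        ((∏ j : Fin n, fsc c (μ0 j) (lam (Fin.last m))) *
            (∏ j : Fin m, fsc c (lam (Fin.last m)) (lam j.castSucc)) -
          (∏ j : Fin m, fsc c (lam j.castSucc) (lam (Fin.last m))) *
            (∏ j : Fin n, fsc c (lam (Fin.last m)) (μ0 j))) *
        HR c sc R μ0 (fun i : Fin m => lam i.castSucc) lp ls)) := by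
  obtain ⟨lam', x, rfl⟩ : ∃ lam' x, lam = Fin.snoc (α := fun _ ↦ ℂ) lam' x :=
    ⟨_, _, (Fin.snoc_init_self lam).symm⟩
  have hlam (j : Fin m) : lam' j ≠ x := by
    simpa using hinj.ne (Fin.castSucc_lt_last j).ne
  have hshift (j : Fin m) : (lam' j - x) ^ 2 + c ^ 2 ≠ 0 :=
    sq_sub_add_sq_ne_zero_iff.2 (by simpa using hpm _ _ (Fin.castSucc_lt_last j).ne')
  have hμ (k : Fin n) : μ0 k ≠ x := by simpa using hmulam k (Fin.last m)
  have hlp : (lp - x) ^ 2 + c ^ 2 ≠ 0 := by simpa using hp1 (Fin.last m)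
  have hls : (ls - x) ^ 2 + c ^ 2 ≠ 0 := by simpa using hs1 (Fin.last m)
  simp only [Fin.snoc_castSucc, Fin.snoc_last, ← VDiff_ne_zero] at hVred hVredp hVreds ⊢
  refine (tendsto_mul_HR_snoc_snoc hc hR (by lia) hμ hlam hshift hlp hls hVred hVredp hVreds
    sc).mono_left (nhdsWithin_mono x fun y hy ↦ ⟨?_, hy.2.1⟩)
  simpa using hy.1 (Fin.last m)
end

section
/- Fix c ∈ ℂ with c ≠ 0, an integer R ≥ 1 and N ≥ 0, and set M = N+R. Under the nondegeneracy hypotheses making H_R well defined, H_R is a symmetric function of the sets of rapidities: for any permutation σ of {1,…,N} and any permutation τ of {1,…,M}, H_R(μ_{σ(1)},…,μ_{σ(N)}; λ_{τ(1)},…,λ_{τ(M)}; λ_p, λ_s) = H_R(μ_1,…,μ_N; λ_1,…,λ_M; λ_p, λ_s). -/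
open Complex Finset Matrix

open LL

/-! Up to a constant, `H_R` is built from products over all rapidities, which a relabelling only
reorders, and from the determinant of `1 + Ũ`. Relabelling the `λ` by `τ` permutes the rows and the
columns of `Ũ` by the same `τ`, which leaves this determinant unchanged. -/

section Reindexing

variable {ι ι' κ κ' A : Type*} [Fintype ι] [Fintype ι'] [CommMonoid A]

theorem prod_prod_comp_equiv [Fintype κ] [Fintype κ'] (σ : ι ≃ ι') (τ : κ ≃ κ')
    (f : ι' → κ' → A) : ∏ i, ∏ k, f (σ i) (τ k) = ∏ i, ∏ k, f i k := by
  simp only [τ.prod_comp (f _), σ.prod_comp fun i => ∏ k, f i k]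

theorem prod_erase_comp_equiv [DecidableEq ι] [DecidableEq ι'] (σ : ι ≃ ι') (i : ι)
    (f : ι' → A) : ∏ k ∈ univ.erase i, f (σ k) = ∏ k ∈ univ.erase (σ i), f k :=
  prod_equiv σ (by simp) fun _ _ => rfl

end Reindexing

theorem det_one_add_submatrix_equiv_self {m n R : Type*} [Fintype m] [Fintype n] [DecidableEq m]
    [DecidableEq n] [CommRing R] (e : n ≃ m) (A : Matrix m m R) :
    (1 + A.submatrix e e).det = (1 + A).det := by
  rw [← det_submatrix_equiv_self e (1 + A), submatrix_add, Pi.add_apply, Pi.add_apply,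
    submatrix_one_equiv]

namespace LL

variable {N M : ℕ} (c : ℂ) (μ : Fin N → ℂ) (lam : Fin M → ℂ) (lp ls : ℂ)
  (σ : Equiv.Perm (Fin N)) (τ : Equiv.Perm (Fin M))

theorem Vp_comp_perm (x : ℂ) : Vp c (μ ∘ σ) (lam ∘ τ) x = Vp c μ lam x :=
  congrArg₂ (· / ·) (Equiv.prod_comp σ fun m => μ m - x + I * c)
    (Equiv.prod_comp τ fun m => lam m - x + I * c)

theorem Vm_comp_perm (x : ℂ) : Vm c (μ ∘ σ) (lam ∘ τ) x = Vm c μ lam x :=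
  congrArg₂ (· / ·) (Equiv.prod_comp σ fun m => μ m - x - I * c)
    (Equiv.prod_comp τ fun m => lam m - x - I * c)

theorem Xi_comp_perm (j : Fin M) : Xi (μ ∘ σ) (lam ∘ τ) j = Xi μ lam (τ j) :=
  congrArg₂ (· / ·) (Equiv.prod_comp σ fun m => μ m - lam (τ j))
    (prod_erase_comp_equiv τ j fun m => lam m - lam (τ j))

theorem Umat_comp_perm :
    Umat c (μ ∘ σ) (lam ∘ τ) lp ls = (Umat c μ lam lp ls).submatrix τ τ := by
  ext j k
  simp only [Umat, submatrix_apply, Function.comp_apply, Vp_comp_perm, Vm_comp_perm, Xi_comp_perm]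

/-- The part of `H_R` that depends on the rapidities: `H_R` without its leading constant, which
involves only `c`, `√c`, `R` and `N`. It makes sense for any numbers `N` and `M` of rapidities. -/
noncomputable def rapidityFactor : ℂ :=
  (∏ j, ∏ k, (lam j - lam k + I * c)) *
    (∏ j, ∏ k, (lam j - μ k)⁻¹) *
    (∏ j, (Vp c μ lam (lam j) - Vm c μ lam (lam j))) *
    (1 + Umat c μ lam lp ls).det /
    ((Vp c μ lam lp - Vm c μ lam lp) * (Vp c μ lam ls - Vm c μ lam ls))

theorem HR_eq_const_mul_rapidityFactor (sc : ℂ) (R : ℕ) :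
    HR c sc R μ lam lp ls =
      (I * sc) ^ R / (c ^ (2 * R - 1) * ((R - 1).factorial : ℂ)) * (-1 : ℂ) ^ (N * (R - 1)) *
        rapidityFactor c μ lam lp ls := by
  simp only [HR, rapidityFactor, mul_assoc, mul_div_assoc]

theorem rapidityFactor_comp_perm :
    rapidityFactor c (μ ∘ σ) (lam ∘ τ) lp ls = rapidityFactor c μ lam lp ls := by
  have prod_lam_lam : ∏ j, ∏ k, (lam (τ j) - lam (τ k) + I * c) =
      ∏ j, ∏ k, (lam j - lam k + I * c) :=
    prod_prod_comp_equiv τ τ fun j k => lam j - lam k + I * c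
  have prod_lam_mu : ∏ j, ∏ k, (lam (τ j) - μ (σ k))⁻¹ = ∏ j, ∏ k, (lam j - μ k)⁻¹ :=
    prod_prod_comp_equiv τ σ fun j k => (lam j - μ k)⁻¹
  have prod_V : ∏ j, (Vp c μ lam (lam (τ j)) - Vm c μ lam (lam (τ j))) =
      ∏ j, (Vp c μ lam (lam j) - Vm c μ lam (lam j)) :=
    Equiv.prod_comp τ fun j => Vp c μ lam (lam j) - Vm c μ lam (lam j)
  simp only [rapidityFactor, Function.comp_apply, Vp_comp_perm, Vm_comp_perm, Umat_comp_perm,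
    det_one_add_submatrix_equiv_self, prod_lam_lam, prod_lam_mu, prod_V]

end LL

/-- Permutation symmetry of the determinant formula `H_R`: it is a symmetric function of
the rapidities `μ₁,…,μ_N` and of the rapidities `λ₁,…,λ_M`. -/
theorem HR_permutation_symmetric {N M R : ℕ} (c sc : ℂ) (hc : c ≠ 0) (hsc : sc ^ 2 = c)
    (hR : 1 ≤ R) (hM : M = N + R)
    (μ : Fin N → ℂ) (lam : Fin M → ℂ) (hinj : Function.Injective lam)
    (hmulam : ∀ k j, μ k ≠ lam j)
    (hpm : ∀ m j, lam m - lam j + I * c ≠ 0 ∧ lam m - lam j - I * c ≠ 0)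
    (lp ls : ℂ)
    (hp1 : ∀ j, (lp - lam j) ^ 2 + c ^ 2 ≠ 0)
    (hs1 : ∀ j, (ls - lam j) ^ 2 + c ^ 2 ≠ 0)
    (hV : ∀ j, Vp c μ lam (lam j) ≠ Vm c μ lam (lam j))
    (hVp : Vp c μ lam lp ≠ Vm c μ lam lp)
    (hVs : Vp c μ lam ls ≠ Vm c μ lam ls)
    (σ : Equiv.Perm (Fin N)) (τ : Equiv.Perm (Fin M)) :
    HR c sc R (μ ∘ σ) (lam ∘ τ) lp ls = HR c sc R μ lam lp ls := by
  rw [HR_eq_const_mul_rapidityFactor, HR_eq_const_mul_rapidityFactor, rapidityFactor_comp_perm]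
end
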